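/- arXiv:2412.07988 — 10 statements merged into one kernel-verified Lean document; each statement's English description precedes it below -/
import Mathlib

section
/- Positivity lemma (Section 5): if b ∈ H is such that ⟨b, ∂φ⟩_H ≥ 0 for every φ ∈ 𝒞_B with φ(x) ≥ 0 for all x ∈ X, then ⟨∂f, f•b⟩_H ≥ 0 for every f ∈ 𝒞_B. -/
open RealInnerProductSpace ContinuousMap

set_option synthInstance.maxHeartbeats 1000000
set_option maxHeartbeats 1000000

/-- **Positivity lemma**: if `b ∈ H` is such that `⟨b, ∂φ⟩_H ≥ 0` for every `φ ∈ 𝒞_B` with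
`φ ≥ 0` on `X`, then `⟨∂f, f•b⟩_H ≥ 0` for every `f ∈ 𝒞_B`. -/
theorem stmt_1
    {X : Type*} [TopologicalSpace X]
    {H : Type*} [NormedAddCommGroup H] [InnerProductSpace ℝ H] [CompleteSpace H]
    (𝒞 : Subalgebra ℝ C(X, ℝ))
    (act : 𝒞 →ₗ[ℝ] H →ₗ[ℝ] H)
    (hact_one : ∀ v : H, act 1 v = v)
    (hact_symm : ∀ (f : 𝒞) (v w : H), ⟪act f v, w⟫ = ⟪v, act f w⟫)
    (hact_bound : ∀ (f : 𝒞) (M : ℝ), (∀ x : X, |(f : C(X, ℝ)) x| ≤ M) →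
      ∀ v : H, ‖act f v‖ ≤ M * ‖v‖)
    (par : 𝒞 →ₗ[ℝ] H)
    (hLeibniz : ∀ f g : 𝒞, par (f * g) = act f (par g) + act g (par f))
    (B : Set X) (hB : IsClosed B)
    (b : H)
    (hb : ∀ φ : 𝒞, (∀ x ∈ B, (φ : C(X, ℝ)) x = 0) → (∀ x : X, 0 ≤ (φ : C(X, ℝ)) x) →
      0 ≤ ⟪b, par φ⟫) :
    ∀ f : 𝒞, (∀ x ∈ B, (f : C(X, ℝ)) x = 0) → 0 ≤ ⟪par f, act f b⟫ := by
  intro f hf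
  have h := hb (f * f) (fun x hx => by simp [hf x hx])
    (fun x => by simpa using mul_self_nonneg ((f : C(X, ℝ)) x))
  rw [hLeibniz, inner_add_right, ← hact_symm, real_inner_comm] at h
  linarith
end

section
/- Dissipativity of the transport operator (Corollary of Section 5): suppose b ∈ H satisfies ⟨b, ∂φ⟩_H ≥ 0 for every φ ∈ 𝒞_B with φ(x) ≥ 0 for all x ∈ X; let H₀ be a real Hilbert space, j : 𝒞 → H₀ an injective linear map with j(𝒞_B) dense in H₀, and U : H₀ → H a surjective linear isometry with U(j f) = f•b for all f ∈ 𝒞. Then the densely defined operator A₀ on H₀ with domain j(𝒞_B) given by A₀(j f) := −U^{-1}(∂f) is dissipative, i.e. ⟨A₀ x, x⟩_{H₀} ≤ 0 for every x ∈ j(𝒞_B). -/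
open RealInnerProductSpace ContinuousMap

set_option synthInstance.maxHeartbeats 1000000
set_option maxHeartbeats 1000000

/-- **Dissipativity of the transport operator**: if `b ∈ H` satisfies `⟨b, ∂φ⟩_H ≥ 0` for every
nonnegative `φ ∈ 𝒞_B`, `j : 𝒞 → H₀` is injective with `j(𝒞_B)` dense, and `U : H₀ → H` is a
surjective linear isometry with `U(j f) = f•b`, then the operator `A₀(j f) := −U⁻¹(∂f)` with
domain `j(𝒞_B)` is dissipative: `⟨A₀ x, x⟩ ≤ 0` for `x ∈ j(𝒞_B)`. -/
theorem stmt_2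
    {X : Type*} [TopologicalSpace X]
    {H : Type*} [NormedAddCommGroup H] [InnerProductSpace ℝ H] [CompleteSpace H]
    {H₀ : Type*} [NormedAddCommGroup H₀] [InnerProductSpace ℝ H₀] [CompleteSpace H₀]
    (𝒞 : Subalgebra ℝ C(X, ℝ))
    (act : 𝒞 →ₗ[ℝ] H →ₗ[ℝ] H)
    (hact_one : ∀ v : H, act 1 v = v)
    (hact_symm : ∀ (f : 𝒞) (v w : H), ⟪act f v, w⟫ = ⟪v, act f w⟫)
    (hact_bound : ∀ (f : 𝒞) (M : ℝ), (∀ x : X, |(f : C(X, ℝ)) x| ≤ M) →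
      ∀ v : H, ‖act f v‖ ≤ M * ‖v‖)
    (par : 𝒞 →ₗ[ℝ] H)
    (hLeibniz : ∀ f g : 𝒞, par (f * g) = act f (par g) + act g (par f))
    (B : Set X) (hB : IsClosed B)
    (b : H)
    (hb : ∀ φ : 𝒞, (∀ x ∈ B, (φ : C(X, ℝ)) x = 0) → (∀ x : X, 0 ≤ (φ : C(X, ℝ)) x) →
      0 ≤ ⟪b, par φ⟫)
    (j : 𝒞 →ₗ[ℝ] H₀) (hjinj : Function.Injective j)
    (hjdense : Dense (⇑j '' {f : 𝒞 | ∀ x ∈ B, (f : C(X, ℝ)) x = 0}))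
    (U : H₀ ≃ₗᵢ[ℝ] H) (hU : ∀ f : 𝒞, U (j f) = act f b) :
    ∀ f : 𝒞, (∀ x ∈ B, (f : C(X, ℝ)) x = 0) →
      ⟪-(U.symm (par f)), j f⟫ ≤ 0 := by
  intro f hf
  have h1 : 0 ≤ ⟪b, par (f * f)⟫ := by
    apply hb
    · intro x hx
      simp [hf x hx]
    · intro x
      simpa using mul_self_nonneg ((f : C(X, ℝ)) x)
  have h2 : ⟪U.symm (par f), j f⟫ = ⟪b, act f (par f)⟫ := by
    rw [← U.inner_map_map, U.apply_symm_apply, hU, ← hact_symm, real_inner_comm]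
  rw [hLeibniz, inner_add_right] at h1
  rw [inner_neg_left, h2]
  linarith
end

section
/- Corollary 'opscoincide'(ii): suppose b is divergence free with respect to B. Then (a) for every f ∈ 𝒞 the element U(j f) = f•b belongs to D(∂_B*) and ∂_B^⊥(j f) = U^{-1}(∂f); in particular j(𝒞) ⊆ D(∂_B^⊥) and ∂_B^⊥(j 1) = 0; and (b) ∂_B^⊥ is skew-symmetric on j(𝒞_B): ⟨∂_B^⊥(j f), j g⟩_{H₀} = −⟨j f, ∂_B^⊥(j g)⟩_{H₀} for all f, g ∈ 𝒞_B. -/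
open RealInnerProductSpace ContinuousMap

set_option synthInstance.maxHeartbeats 1000000
set_option maxHeartbeats 1000000

/-- **Corollary `opscoincide`(ii)**: suppose `b` is divergence free with respect to `B`.
Then (a) for every `f ∈ 𝒞` the element `U(j f) = f•b` belongs to `D(∂_B*)` and
`∂_B^⊥(j f) = U⁻¹(∂f)` (equivalently `∂_B*(U(j f)) = −U⁻¹(∂f)`, expressed below through the
defining adjoint relation, whose value is unique by density of `j(𝒞_B)`); in particular
`∂_B^⊥(j 1) = 0`; and (b) `∂_B^⊥` is skew-symmetric on `j(𝒞_B)`. -/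
theorem stmt_4
    {X : Type*} [TopologicalSpace X]
    {H : Type*} [NormedAddCommGroup H] [InnerProductSpace ℝ H] [CompleteSpace H]
    {H₀ : Type*} [NormedAddCommGroup H₀] [InnerProductSpace ℝ H₀] [CompleteSpace H₀]
    (𝒞 : Subalgebra ℝ C(X, ℝ))
    (act : 𝒞 →ₗ[ℝ] H →ₗ[ℝ] H)
    (hact_one : ∀ v : H, act 1 v = v)
    (hact_symm : ∀ (f : 𝒞) (v w : H), ⟪act f v, w⟫ = ⟪v, act f w⟫)
    (hact_bound : ∀ (f : 𝒞) (M : ℝ), (∀ x : X, |(f : C(X, ℝ)) x| ≤ M) →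
      ∀ v : H, ‖act f v‖ ≤ M * ‖v‖)
    (par : 𝒞 →ₗ[ℝ] H)
    (hLeibniz : ∀ f g : 𝒞, par (f * g) = act f (par g) + act g (par f))
    (B : Set X) (hB : IsClosed B)
    (b : H) (hbne : b ≠ 0)
    (hdivfree : ∀ φ : 𝒞, (∀ x ∈ B, (φ : C(X, ℝ)) x = 0) → ⟪b, par φ⟫ = 0)
    (j : 𝒞 →ₗ[ℝ] H₀) (hjinj : Function.Injective j)
    (hjdense : Dense (⇑j '' {f : 𝒞 | ∀ x ∈ B, (f : C(X, ℝ)) x = 0}))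
    (U : H₀ ≃ₗᵢ[ℝ] H) (hU : ∀ f : 𝒞, U (j f) = act f b) :
    -- (a) `U (j f) ∈ D(∂_B*)` with `∂_B*(U (j f)) = −U⁻¹(∂ f)`, i.e. `∂_B^⊥(j f) = U⁻¹(∂ f)`
    (∀ f : 𝒞, ∀ φ : 𝒞, (∀ x ∈ B, (φ : C(X, ℝ)) x = 0) →
        ⟪U (j f), par φ⟫ = ⟪-(U.symm (par f)), j φ⟫) ∧
    -- in particular `j 1 ∈ D(∂_B^⊥)` with `∂_B^⊥(j 1) = 0`
    (∀ φ : 𝒞, (∀ x ∈ B, (φ : C(X, ℝ)) x = 0) → ⟪U (j 1), par φ⟫ = (0 : ℝ)) ∧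
    -- (b) skew-symmetry on `j(𝒞_B)`: with `∂_B^⊥(j f) = −wf` and `∂_B^⊥(j g) = −wg`, where
    -- `wf, wg` are the (unique) adjoint values, `⟨∂_B^⊥(j f), j g⟩ = −⟨j f, ∂_B^⊥(j g)⟩`
    (∀ f g : 𝒞, (∀ x ∈ B, (f : C(X, ℝ)) x = 0) → (∀ x ∈ B, (g : C(X, ℝ)) x = 0) →
      ∀ wf wg : H₀,
        (∀ φ : 𝒞, (∀ x ∈ B, (φ : C(X, ℝ)) x = 0) → ⟪U (j f), par φ⟫ = ⟪wf, j φ⟫) →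
        (∀ φ : 𝒞, (∀ x ∈ B, (φ : C(X, ℝ)) x = 0) → ⟪U (j g), par φ⟫ = ⟪wg, j φ⟫) →
        ⟪-wf, j g⟫ = -⟪j f, -wg⟫) := by
  have key : ∀ f φ : 𝒞, (∀ x ∈ B, (φ : C(X, ℝ)) x = 0) →
      ⟪U (j f), par φ⟫ = -⟪par f, U (j φ)⟫ := by
    intro f φ hφ
    have h := hdivfree (f * φ) (by
      intro x hx
      have h0 := hφ x hx
      simp [h0])
    rw [hLeibniz, inner_add_right, ← hact_symm, ← hact_symm, ← hU, ← hU] at h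
    rw [real_inner_comm (U (j φ)) (par f)]
    linarith
  refine ⟨?_, ?_, ?_⟩
  · intro f φ hφ
    rw [key f φ hφ, inner_neg_left, ← U.inner_map_map (U.symm (par f)) (j φ),
      U.apply_symm_apply]
  · intro φ hφ
    rw [hU, hact_one]
    exact hdivfree φ hφ
  · intro f g hf hg wf wg hwf hwg
    have h1 := hwf g hg
    have h2 := hwg f hf
    have h3 := key f g hg
    rw [inner_neg_left, inner_neg_right, ← h1, h3, real_inner_comm wg (j f), ← h2,
      real_inner_comm (U (j g)) (par f)]
end

section
/- Existence of m-dissipative extensions (operator-theoretic core of Theorem 'Zorn'(i)): let H be a real Hilbert space and A₀ a linear operator with dense domain D(A₀) ⊆ H such that ⟨A₀ f, f⟩_H ≤ 0 for all f ∈ D(A₀). Then there exists a linear operator A on H extending A₀ (i.e. D(A₀) ⊆ D(A) and A f = A₀ f for f ∈ D(A₀)) such that ⟨A f, f⟩_H ≤ 0 for all f ∈ D(A) and the range {f − A f : f ∈ D(A)} is all of H; that is, A₀ admits an m-dissipative extension. -/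
open RealInnerProductSpace

set_option synthInstance.maxHeartbeats 1000000
set_option maxHeartbeats 1000000

theorem cayley_ext {H : Type*} [NormedAddCommGroup H] [InnerProductSpace ℝ H] [CompleteSpace H]
    {E : Type*} [AddCommGroup E] [Module ℝ E] (f e : E →ₗ[ℝ] H) (h : ∀ x, ‖f x‖ ≤ ‖e x‖) :
    ∃ C : H →L[ℝ] H, (∀ y, ‖C y‖ ≤ ‖y‖) ∧ ∀ x, C (e x) = f x := by
  let K := (LinearMap.range e).topologicalClosure
  have hK : IsClosed (K : Set H) := Submodule.isClosed_topologicalClosure _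
  haveI : CompleteSpace K := hK.completeSpace_coe
  have hmem : ∀ x, e x ∈ K := fun x => Submodule.le_topologicalClosure _ (LinearMap.mem_range_self e x)
  let e' : E →ₗ[ℝ] K := e.codRestrict K hmem
  have hd : DenseRange e' := by
    intro y
    rw [closure_subtype]
    have h1 : ((↑) '' Set.range e' : Set H) = (LinearMap.range e : Set H) := by
      ext z
      simp [e']
    rw [h1]
    exact y.2
  have hn : ∀ x, ‖f x‖ ≤ 1 * ‖e' x‖ := fun x => by
    rw [one_mul]; exact h x
  refine ⟨(f.extendOfNorm e').comp K.orthogonalProjectionOnto, fun y => ?_, fun x => ?_⟩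
  · have h1 := LinearMap.norm_extendOfNorm_apply_le hd 1 hn (K.orthogonalProjectionOnto y)
    have h2 := K.orthogonalProjectionOnto.le_opNorm y
    have h3 := K.orthogonalProjectionOnto_norm_le
    have h4 := mul_le_mul_of_nonneg_right h3 (norm_nonneg y)
    rw [ContinuousLinearMap.comp_apply]
    linarith
  · have h1 : K.orthogonalProjectionOnto (e x) = e' x :=
      Submodule.orthogonalProjectionOnto_mem_subspace_eq_self (e' x)
    rw [ContinuousLinearMap.comp_apply, h1]
    exact LinearMap.extendOfNorm_eq hd ⟨1, hn⟩ x

theorem contr_inj {H : Type*} [NormedAddCommGroup H] [InnerProductSpace ℝ H] [CompleteSpace H]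
    (C : H →L[ℝ] H) (hC : ∀ y, ‖C y‖ ≤ ‖y‖) (S : Set H) (hS : Dense S)
    (hr : ∀ x ∈ S, ∃ y, y + C y = x) (g : H) (hg : g + C g = 0) : g = 0 := by
  have hCn : ‖ContinuousLinearMap.adjoint C‖ ≤ 1 := by
    rw [LinearIsometryEquiv.norm_map]
    exact C.opNorm_le_bound zero_le_one (by simpa using hC)
  have h1 : ‖ContinuousLinearMap.adjoint C g‖ ≤ ‖g‖ := by
    have := (ContinuousLinearMap.adjoint C).le_of_opNorm_le hCn g
    simpa using this
  have hCg : C g = -g := by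
    rw [add_comm] at hg; exact eq_neg_of_add_eq_zero_left hg
  have h2 : ⟪ContinuousLinearMap.adjoint C g, g⟫ = -‖g‖^2 := by
    rw [ContinuousLinearMap.adjoint_inner_left, hCg, inner_neg_right, real_inner_self_eq_norm_sq]
  have h3 := norm_add_sq_real (ContinuousLinearMap.adjoint C g) g
  have h4 : ‖ContinuousLinearMap.adjoint C g‖^2 ≤ ‖g‖^2 := by gcongr
  have h5 : ContinuousLinearMap.adjoint C g + g = 0 := by
    rw [← norm_eq_zero]
    nlinarith [norm_nonneg (ContinuousLinearMap.adjoint C g + g)]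
  refine hS.eq_zero_of_inner_left ℝ fun v hv => ?_
  obtain ⟨y, rfl⟩ := hr v hv
  rw [inner_add_right, ← ContinuousLinearMap.adjoint_inner_left, ← inner_add_left, add_comm, h5,
    inner_zero_left]

/-- **Existence of m-dissipative extensions**: every densely defined dissipative operator `A₀`
on a real Hilbert space `H` admits an extension `A` that is dissipative and such that the range
of `Id − A` is all of `H`; i.e. `A₀` has an m-dissipative extension. -/
theorem stmt_5
    {H : Type*} [NormedAddCommGroup H] [InnerProductSpace ℝ H] [CompleteSpace H]
    (A₀ : H →ₗ.[ℝ] H) (hdense : Dense (A₀.domain : Set H))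
    (hdiss : ∀ x : A₀.domain, ⟪A₀ x, (x : H)⟫ ≤ 0) :
    ∃ A : H →ₗ.[ℝ] H, A₀ ≤ A ∧ (∀ x : A.domain, ⟪A x, (x : H)⟫ ≤ 0) ∧
      (∀ h : H, ∃ x : A.domain, (x : H) - A x = h) := by
  let f : A₀.domain →ₗ[ℝ] H := A₀.domain.subtype + A₀.toFun
  let e : A₀.domain →ₗ[ℝ] H := A₀.domain.subtype - A₀.toFun
  have hf : ∀ x, f x = (x : H) + A₀ x := fun x => rfl
  have he : ∀ x, e x = (x : H) - A₀ x := fun x => rfl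
  obtain ⟨C, hC, hCe⟩ := cayley_ext f e (fun x => by
    rw [hf, he]
    have h1 := norm_add_sq_real (x : H) (A₀ x)
    have h2 := norm_sub_sq_real (x : H) (A₀ x)
    have h3 := hdiss x
    rw [real_inner_comm] at h3
    exact le_of_sq_le_sq (by linarith) (norm_nonneg _))
  have hinj := contr_inj C hC (A₀.domain : Set H) hdense (fun x hx => by
    refine ⟨(2⁻¹ : ℝ) • e ⟨x, hx⟩, ?_⟩
    rw [map_smul, hCe, hf, he]
    module)
  let L : H →ₗ[ℝ] H × H :=
    ((2⁻¹ : ℝ) • (LinearMap.id + (C : H →ₗ[ℝ] H))).prod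
      ((2⁻¹ : ℝ) • ((C : H →ₗ[ℝ] H) - LinearMap.id))
  have hL : ∀ y, L y = ((2⁻¹ : ℝ) • (y + C y), (2⁻¹ : ℝ) • (C y - y)) := fun y => rfl
  let G := LinearMap.range L
  have hG : ∀ (x : H × H) (_hx : x ∈ G) (_hx' : x.fst = 0), x.snd = 0 := by
    rintro _ ⟨y, rfl⟩ h
    rw [hL] at h ⊢
    have h0 : y = 0 := hinj y ((smul_eq_zero.mp h).resolve_left (by norm_num))
    simp [h0]
  have hgr : G.toLinearPMap.graph = G := Submodule.toLinearPMap_graph_eq G hG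
  refine ⟨G.toLinearPMap, ?_, ?_, ?_⟩
  · apply LinearPMap.le_of_le_graph
    rw [hgr]
    rintro ⟨a, b⟩ hab
    rw [LinearPMap.mem_graph_iff] at hab
    obtain ⟨x, hx, hb⟩ := hab
    refine ⟨e x, ?_⟩
    rw [hL, hCe, hf, he]
    simp only at hx hb
    rw [hb, hx]
    ext1
    · simp only; module
    · simp only; module
  · intro x
    have hx := LinearPMap.mem_graph _ x
    rw [hgr] at hx
    obtain ⟨y, hy⟩ := hx
    rw [hL, Prod.mk.injEq] at hy
    rw [← hy.1, ← hy.2]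
    have h1 : ‖C y‖^2 ≤ ‖y‖^2 := by gcongr; exact hC y
    simp only [inner_smul_left, inner_smul_right, inner_add_right, inner_sub_left,
      real_inner_self_eq_norm_sq, real_inner_comm (C y) y]
    simp
    nlinarith
  · intro h
    have hm : L h ∈ G.toLinearPMap.graph := by rw [hgr]; exact ⟨h, rfl⟩
    rw [LinearPMap.mem_graph_iff] at hm
    obtain ⟨x, h1, h2⟩ := hm
    refine ⟨x, ?_⟩
    rw [h1, h2, hL]
    simp only; module
end

section
/- Integration by parts on spaces of martingale dimension one (Theorem 'IbP'): suppose b is divergence free with respect to B. Let f₁, f₂ ∈ D(∂_B^⊥) admit representations fᵢ = j gᵢ + U^{-1}(∂uᵢ) + wᵢ with gᵢ, uᵢ ∈ 𝒞, ∂uᵢ ∈ D(∂_B*), wᵢ ∈ ker ∂^⊥, and assume zᵢ := ∂_B^⊥ fᵢ − U^{-1}(∂gᵢ) ∈ ker ∂^⊥ (i = 1,2). Then ⟨∂_B^⊥ f₁, f₂⟩_{H₀} + ⟨f₁, ∂_B^⊥ f₂⟩_{H₀} = n_B(f₁b)(g₂) + n_B(f₂b)(g₁) − n_B b(g₁g₂)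 + ⟨w₁, z₂⟩_{H₀} + ⟨z₁, w₂⟩_{H₀}. -/
open RealInnerProductSpace ContinuousMap

set_option synthInstance.maxHeartbeats 1000000
set_option maxHeartbeats 1000000

/-- **Integration by parts on spaces of martingale dimension one** (Theorem `IbP`):
suppose `b` is divergence free with respect to `B`.  If `f₁, f₂ ∈ D(∂_B^⊥)` admit
representations `fᵢ = j gᵢ + U⁻¹(∂uᵢ) + wᵢ` with `gᵢ, uᵢ ∈ 𝒞`, `∂uᵢ ∈ D(∂_B*)`,
`wᵢ ∈ ker ∂^⊥`, and `zᵢ := ∂_B^⊥ fᵢ − U⁻¹(∂gᵢ) ∈ ker ∂^⊥`, then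
`⟨∂_B^⊥f₁, f₂⟩ + ⟨f₁, ∂_B^⊥f₂⟩ = n_B(f₁b)(g₂) + n_B(f₂b)(g₁) − n_B b(g₁g₂) + ⟨w₁,z₂⟩ + ⟨z₁,w₂⟩`.
Here `dᵢ` denotes the (unique) adjoint value `∂_B*(U fᵢ)`, so that `∂_B^⊥ fᵢ = −dᵢ`,
`n_B(fᵢb)(φ) = ⟨U fᵢ, ∂φ⟩ + ⟨−dᵢ, jφ⟩` and `n_B b(ψ) = ⟨b, ∂ψ⟩`. -/
theorem stmt_10
    {X : Type*} [MetricSpace X] [CompactSpace X]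
    {H : Type*} [NormedAddCommGroup H] [InnerProductSpace ℝ H] [CompleteSpace H]
    {H₀ : Type*} [NormedAddCommGroup H₀] [InnerProductSpace ℝ H₀] [CompleteSpace H₀]
    (𝒞 : Subalgebra ℝ C(X, ℝ))
    (act : 𝒞 →ₗ[ℝ] H →ₗ[ℝ] H)
    (hact_one : ∀ v : H, act 1 v = v)
    (hact_symm : ∀ (f : 𝒞) (v w : H), ⟪act f v, w⟫ = ⟪v, act f w⟫)
    (hact_bound : ∀ (f : 𝒞) (v : H), ‖act f v‖ ≤ ‖(f : C(X, ℝ))‖ * ‖v‖)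
    (par : 𝒞 →ₗ[ℝ] H)
    (hLeibniz : ∀ f g : 𝒞, par (f * g) = act f (par g) + act g (par f))
    (B : Set X) (hB : IsClosed B)
    (b : H) (hbne : b ≠ 0)
    (hdivfree : ∀ φ : 𝒞, (∀ x ∈ B, (φ : C(X, ℝ)) x = 0) → ⟪b, par φ⟫ = 0)
    (j : 𝒞 →ₗ[ℝ] H₀) (hjinj : Function.Injective j)
    (hjdense : Dense (⇑j '' {f : 𝒞 | ∀ x ∈ B, (f : C(X, ℝ)) x = 0}))
    (U : H₀ ≃ₗᵢ[ℝ] H) (hU : ∀ f : 𝒞, U (j f) = act f b) :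
    ∀ (f₁ f₂ d₁ d₂ : H₀) (g₁ g₂ u₁ u₂ : 𝒞) (w₁ w₂ : H₀),
      -- `fᵢ ∈ D(∂_B^⊥)` with `∂_B*(U fᵢ) = dᵢ`
      (∀ φ : 𝒞, (∀ x ∈ B, (φ : C(X, ℝ)) x = 0) → ⟪U f₁, par φ⟫ = ⟪d₁, j φ⟫) →
      (∀ φ : 𝒞, (∀ x ∈ B, (φ : C(X, ℝ)) x = 0) → ⟪U f₂, par φ⟫ = ⟪d₂, j φ⟫) →
      -- `∂uᵢ ∈ D(∂_B*)`
      (∃ e₁ : H₀, ∀ φ : 𝒞, (∀ x ∈ B, (φ : C(X, ℝ)) x = 0) → ⟪par u₁, par φ⟫ = ⟪e₁, j φ⟫) →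
      (∃ e₂ : H₀, ∀ φ : 𝒞, (∀ x ∈ B, (φ : C(X, ℝ)) x = 0) → ⟪par u₂, par φ⟫ = ⟪e₂, j φ⟫) →
      -- `wᵢ ∈ ker ∂^⊥`
      (∀ φ : 𝒞, ⟪U w₁, par φ⟫ = 0) →
      (∀ φ : 𝒞, ⟪U w₂, par φ⟫ = 0) →
      -- the representations
      f₁ = j g₁ + U.symm (par u₁) + w₁ →
      f₂ = j g₂ + U.symm (par u₂) + w₂ →
      -- `zᵢ := ∂_B^⊥ fᵢ − U⁻¹(∂gᵢ) = −dᵢ − U⁻¹(∂gᵢ) ∈ ker ∂^⊥`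
      (∀ φ : 𝒞, ⟪U (-d₁ - U.symm (par g₁)), par φ⟫ = 0) →
      (∀ φ : 𝒞, ⟪U (-d₂ - U.symm (par g₂)), par φ⟫ = 0) →
      ⟪-d₁, f₂⟫ + ⟪f₁, -d₂⟫ =
        (⟪U f₁, par g₂⟫ + ⟪-d₁, j g₂⟫) + (⟪U f₂, par g₁⟫ + ⟪-d₂, j g₁⟫)
          - ⟪b, par (g₁ * g₂)⟫
          + ⟪w₁, -d₂ - U.symm (par g₂)⟫ + ⟪-d₁ - U.symm (par g₁), w₂⟫ := by
  intro f₁ f₂ d₁ d₂ g₁ g₂ u₁ u₂ w₁ w₂ _ _ _ _ hw₁ hw₂ hf₁ hf₂ hz₁ hz₂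
  have hs : ∀ (x : H₀) (y : H), ⟪x, U.symm y⟫ = ⟪U x, y⟫ := by
    intro x y
    rw [← U.inner_map_map x (U.symm y), U.apply_symm_apply]
  have hs' : ∀ (x : H₀) (y : H), ⟪U.symm y, x⟫ = ⟪U x, y⟫ := by
    intro x y
    rw [real_inner_comm, hs]
  have e₁ := hz₁ u₂
  have e₂ := hz₂ u₁
  have p₁ := hw₁ g₂
  have p₂ := hw₂ g₁
  have c₁ := real_inner_comm (par u₁) (par g₂)
  have c₂ := real_inner_comm (par u₂) (par g₁)
  have c₃ := real_inner_comm (j g₁) d₂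
  have c₄ : ⟪U.symm (par u₁), d₂⟫ = ⟪U d₂, par u₁⟫ := hs' _ _
  simp only [map_sub, map_neg, U.apply_symm_apply, inner_sub_left, inner_neg_left] at e₁ e₂
  rw [hLeibniz, inner_add_right, ← hact_symm, ← hact_symm, hf₁, hf₂]
  simp only [map_add, map_neg, U.apply_symm_apply, inner_add_left, inner_add_right, inner_sub_left,
    inner_sub_right, inner_neg_left, inner_neg_right, hs, hs', hU]
  linarith
end

section
/- Boundary quadruple for solenoidal fields (Theorem 'simplequadruple'): suppose b is solenoidal and B is finite with harmonic partition functions ψ_q as in the finite boundary data. Define the Hilbert space H̃± := ℝ^B ⊕ ker ∂^⊥ with inner product ⟨(F₁,w₁),(F₂,w₂)⟩ := Σ_{q∈B} F₁(q)F₂(q) + ⟨w₁,w₂⟩_{H₀}; since b is solenoidal, j(1) ∈ ker ∂^⊥, and one lets H± be the orthogonal complement in H̃± of the span of (𝟏_B, −j(1)) and P± the orthogonal projection of H̃± onto H±. Assume every f ∈ D(∂_B^⊥) admits a key representation f = j g + U^{-1}(∂u) + w with g, u ∈ 𝒞, ∂u ∈ D(∂_B*), w ∈ ker ∂^⊥ and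 z := ∂_B^⊥ f − U^{-1}(∂g) ∈ ker ∂^⊥, and for such a representation set G₋f := (1/√2)·P±((g(q)+n_B(fb)(q))_{q∈B}, w+z) and G₊f := (1/√2)·P±((g(q)−n_B(fb)(q))_{q∈B}, w−z). Then: (a) G₋f and G₊f do not depend on the chosen key representation of f; (b) for all f₁, f₂ ∈ D(∂_B^⊥): ⟨∂_B^⊥ f₁, f₂⟩_{H₀} + ⟨f₁, ∂_B^⊥ f₂⟩_{H₀} = ⟨G₋f₁, G₋f₂⟩ − ⟨G₊f₁, G₊f₂⟩; (c) the map f ↦ (G₋f, G₊f) from D(∂_B^⊥) to H± × H± is surjective. In other words, (H±, H±, G₋, G₊) is a boundary quadruple for the operator j f ↦ −U^{-1}(∂f) on j(𝒞_B). -/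
open RealInnerProductSpace ContinuousMap

set_option synthInstance.maxHeartbeats 1000000
set_option maxHeartbeats 1000000

namespace Stmt11

variable {X : Type*} [MetricSpace X] [CompactSpace X]
variable {H : Type*} [NormedAddCommGroup H] [InnerProductSpace ℝ H] [CompleteSpace H]
variable {H₀ : Type*} [NormedAddCommGroup H₀] [InnerProductSpace ℝ H₀] [CompleteSpace H₀]
variable {ι : Type*} [Fintype ι]

/-- elements of `𝒞` vanishing on `B`, i.e. membership in `𝒞_B` -/
def Vanish (𝒞 : Subalgebra ℝ C(X, ℝ)) (B : Set X) (f : 𝒞) : Prop :=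
  ∀ x ∈ B, (f : C(X, ℝ)) x = 0

/-- `d` is the value of the adjoint `∂_B^*` at `v ∈ H`, i.e. `v ∈ D(∂_B^*)` and `∂_B^* v = d`
(the value is unique by density of `j(𝒞_B)`). -/
def AdjRel (𝒞 : Subalgebra ℝ C(X, ℝ)) (B : Set X) (par : 𝒞 →ₗ[ℝ] H)
    (j : 𝒞 →ₗ[ℝ] H₀) (v : H) (d : H₀) : Prop :=
  ∀ φ : 𝒞, Vanish 𝒞 B φ → ⟪v, par φ⟫ = ⟪d, j φ⟫

/-- membership in `ker ∂^⊥` -/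
def KerDperp (𝒞 : Subalgebra ℝ C(X, ℝ)) (par : 𝒞 →ₗ[ℝ] H) (U : H₀ ≃ₗᵢ[ℝ] H) (w : H₀) : Prop :=
  ∀ φ : 𝒞, ⟪U w, par φ⟫ = 0

/-- a key representation of `f ∈ D(∂_B^⊥)`: `f = j g + U⁻¹(∂u) + w` with `∂u ∈ D(∂_B^*)`,
`w ∈ ker ∂^⊥`, `d = ∂_B^*(U f)` (so `∂_B^⊥ f = −d`), and
`z := ∂_B^⊥ f − U⁻¹(∂g) = −d − U⁻¹(∂g) ∈ ker ∂^⊥`. -/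
def KeyRep (𝒞 : Subalgebra ℝ C(X, ℝ)) (B : Set X) (par : 𝒞 →ₗ[ℝ] H)
    (j : 𝒞 →ₗ[ℝ] H₀) (U : H₀ ≃ₗᵢ[ℝ] H) (f d : H₀) (g u : 𝒞) (w : H₀) : Prop :=
  AdjRel 𝒞 B par j (U f) d ∧
  (∃ e : H₀, AdjRel 𝒞 B par j (par u) e) ∧
  KerDperp 𝒞 par U w ∧
  f = j g + U.symm (par u) + w ∧
  KerDperp 𝒞 par U (-d - U.symm (par g))

/-- the inner product of the boundary space `H̃± = ℝ^B ⊕ ker ∂^⊥` -/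
noncomputable def ipTilde (p₁ p₂ : (ι → ℝ) × H₀) : ℝ :=
  (∑ i, p₁.1 i * p₂.1 i) + ⟪p₁.2, p₂.2⟫

/-- the orthogonal projection of `H̃±` onto the orthogonal complement `H±` of the span of `e` -/
noncomputable def projPerp (e x : (ι → ℝ) × H₀) : (ι → ℝ) × H₀ :=
  x - (ipTilde x e / ipTilde e e) • e

/-- the normal part `n_B(fb)` at the boundary point indexed by `i`, where `d = ∂_B^*(U f)`:
`n_B(fb)(ψ_i) = ⟨U f, ∂ψ_i⟩ + ⟨∂_B^⊥ f, j ψ_i⟩` -/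
noncomputable def nfb (𝒞 : Subalgebra ℝ C(X, ℝ)) (par : 𝒞 →ₗ[ℝ] H) (j : 𝒞 →ₗ[ℝ] H₀)
    (U : H₀ ≃ₗᵢ[ℝ] H) (ψ : ι → 𝒞) (f d : H₀) (i : ι) : ℝ :=
  ⟪U f, par (ψ i)⟫ + ⟪-d, j (ψ i)⟫

/-- `G₋ f := (1/√2)·P±((g(q)+n_B(fb)(q))_q, w+z)` for a key representation `(d, g, u, w)` -/
noncomputable def Gminus (𝒞 : Subalgebra ℝ C(X, ℝ)) (par : 𝒞 →ₗ[ℝ] H) (j : 𝒞 →ₗ[ℝ] H₀)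
    (U : H₀ ≃ₗᵢ[ℝ] H) (q : ι → X) (ψ : ι → 𝒞) (f d : H₀) (g : 𝒞) (w : H₀) :
    (ι → ℝ) × H₀ :=
  (Real.sqrt 2)⁻¹ •
    projPerp (fun _ => (1 : ℝ), -(j 1))
      ((fun i => (g : C(X, ℝ)) (q i) + nfb 𝒞 par j U ψ f d i),
        w + (-d - U.symm (par g)))

/-- `G₊ f := (1/√2)·P±((g(q)−n_B(fb)(q))_q, w−z)` for a key representation `(d, g, u, w)` -/
noncomputable def Gplus (𝒞 : Subalgebra ℝ C(X, ℝ)) (par : 𝒞 →ₗ[ℝ] H) (j : 𝒞 →ₗ[ℝ] H₀)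
    (U : H₀ ≃ₗᵢ[ℝ] H) (q : ι → X) (ψ : ι → 𝒞) (f d : H₀) (g : 𝒞) (w : H₀) :
    (ι → ℝ) × H₀ :=
  (Real.sqrt 2)⁻¹ •
    projPerp (fun _ => (1 : ℝ), -(j 1))
      ((fun i => (g : C(X, ℝ)) (q i) - nfb 𝒞 par j U ψ f d i),
        w - (-d - U.symm (par g)))

section helpers

theorem ip_add_left (x y z : (ι → ℝ) × H₀) : ipTilde (x + y) z = ipTilde x z + ipTilde y z := by
  simp only [ipTilde, Prod.fst_add, Prod.snd_add, Pi.add_apply, add_mul, Finset.sum_add_distrib,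
    inner_add_left]
  ring

theorem ip_smul_left (r : ℝ) (x z : (ι → ℝ) × H₀) : ipTilde (r • x) z = r * ipTilde x z := by
  simp only [ipTilde, Prod.smul_fst, Prod.smul_snd, Pi.smul_apply, smul_eq_mul, mul_assoc,
    ← Finset.mul_sum, real_inner_smul_left]
  ring

theorem ip_comm (x z : (ι → ℝ) × H₀) : ipTilde x z = ipTilde z x := by
  simp only [ipTilde, mul_comm, real_inner_comm]

theorem ip_sub_left (x y z : (ι → ℝ) × H₀) : ipTilde (x - y) z = ipTilde x z - ipTilde y z := by
  have h : x - y = x + (-1 : ℝ) • y := by rw [neg_one_smul, sub_eq_add_neg]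
  rw [h, ip_add_left, ip_smul_left]; ring

theorem ip_add_right (x y z : (ι → ℝ) × H₀) : ipTilde z (x + y) = ipTilde z x + ipTilde z y := by
  rw [ip_comm, ip_add_left, ip_comm x, ip_comm y]

theorem ip_sub_right (x y z : (ι → ℝ) × H₀) : ipTilde z (x - y) = ipTilde z x - ipTilde z y := by
  rw [ip_comm, ip_sub_left, ip_comm x, ip_comm y]

theorem ip_smul_right (r : ℝ) (x z : (ι → ℝ) × H₀) : ipTilde z (r • x) = r * ipTilde z x := by
  rw [ip_comm, ip_smul_left, ip_comm x]

theorem ip_proj (e x y : (ι → ℝ) × H₀) (he : ipTilde e e ≠ 0) :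
    ipTilde (projPerp e x) (projPerp e y) =
      ipTilde x y - ipTilde x e * ipTilde y e / ipTilde e e := by
  simp only [projPerp, ip_sub_left, ip_sub_right, ip_smul_left, ip_smul_right, ip_comm e y]
  field_simp
  ring

theorem proj_add_smul (e x : (ι → ℝ) × H₀) (c : ℝ) (he : ipTilde e e ≠ 0) :
    projPerp e (x + c • e) = projPerp e x := by
  have h : (ipTilde x e + c * ipTilde e e) / ipTilde e e = ipTilde x e / ipTilde e e + c := by
    field_simp
  simp only [projPerp, ip_add_left, ip_smul_left, h, add_smul]
  abel

theorem proj_of_perp (e x : (ι → ℝ) × H₀) (h : ipTilde x e = 0) : projPerp e x = x := by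
  simp [projPerp, h]

theorem quad (e a₁ a₂ c₁ c₂ : (ι → ℝ) × H₀) (he : ipTilde e e ≠ 0)
    (h₁ : ipTilde c₁ e = 0) (h₂ : ipTilde c₂ e = 0) :
    ipTilde ((Real.sqrt 2)⁻¹ • projPerp e (a₁ + c₁)) ((Real.sqrt 2)⁻¹ • projPerp e (a₂ + c₂)) -
    ipTilde ((Real.sqrt 2)⁻¹ • projPerp e (a₁ - c₁)) ((Real.sqrt 2)⁻¹ • projPerp e (a₂ - c₂))
    = ipTilde a₁ c₂ + ipTilde c₁ a₂ := by
  have hs : (Real.sqrt 2)⁻¹ * (Real.sqrt 2)⁻¹ = 1 / 2 := by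
    rw [← mul_inv, Real.mul_self_sqrt (by norm_num)]; norm_num
  simp only [ip_smul_left, ip_smul_right, ip_proj _ _ _ he, ← mul_assoc, hs]
  simp only [ip_add_left, ip_sub_left, ip_add_right, ip_sub_right, h₁, h₂]
  ring

theorem e_ne (x : H₀) (hx : x ≠ 0) :
    ipTilde ((fun _ => (1 : ℝ), -x) : (ι → ℝ) × H₀) (fun _ => (1 : ℝ), -x) ≠ 0 := by
  have h : 0 < ⟪x, x⟫ := real_inner_self_pos.2 hx
  simp only [ipTilde, inner_neg_neg]
  have : (0 : ℝ) ≤ ∑ _i : ι, (1 : ℝ) * 1 := Finset.sum_nonneg fun _ _ => by norm_num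
  linarith

theorem ip_e (x y : H₀) (n : ι → ℝ) :
    ipTilde (n, y) ((fun _ => (1 : ℝ), -x) : (ι → ℝ) × H₀) = (∑ i, n i) - ⟪y, x⟫ := by
  simp [ipTilde, sub_eq_add_neg]

theorem ker_par_zero {𝒞 : Subalgebra ℝ C(X, ℝ)} {par : 𝒞 →ₗ[ℝ] H} {U : H₀ ≃ₗᵢ[ℝ] H} (g : 𝒞)
    (h : KerDperp 𝒞 par U (U.symm (par g))) : par g = 0 := by
  have := h g
  rwa [U.apply_symm_apply, inner_self_eq_zero] at this

theorem ker_inner {𝒞 : Subalgebra ℝ C(X, ℝ)} {par : 𝒞 →ₗ[ℝ] H} {U : H₀ ≃ₗᵢ[ℝ] H} {w : H₀}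
    (h : KerDperp 𝒞 par U w) (g : 𝒞) : ⟪w, U.symm (par g)⟫ = 0 := by
  rw [← U.inner_map_map, U.apply_symm_apply]; exact h g

theorem ker_add {𝒞 : Subalgebra ℝ C(X, ℝ)} {par : 𝒞 →ₗ[ℝ] H} {U : H₀ ≃ₗᵢ[ℝ] H} {w v : H₀}
    (h : KerDperp 𝒞 par U w) (h' : KerDperp 𝒞 par U v) : KerDperp 𝒞 par U (w + v) := by
  intro φ; rw [map_add, inner_add_left, h φ, h' φ, add_zero]

theorem ker_smul {𝒞 : Subalgebra ℝ C(X, ℝ)} {par : 𝒞 →ₗ[ℝ] H} {U : H₀ ≃ₗᵢ[ℝ] H} {w : H₀}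
    (c : ℝ) (h : KerDperp 𝒞 par U w) : KerDperp 𝒞 par U (c • w) := by
  intro φ; rw [map_smul, real_inner_smul_left, h φ, mul_zero]

theorem ker_sub {𝒞 : Subalgebra ℝ C(X, ℝ)} {par : 𝒞 →ₗ[ℝ] H} {U : H₀ ≃ₗᵢ[ℝ] H} {w v : H₀}
    (h : KerDperp 𝒞 par U w) (h' : KerDperp 𝒞 par U v) : KerDperp 𝒞 par U (w - v) := by
  intro φ; rw [map_sub, inner_sub_left, h φ, h' φ, sub_zero]

end helpers

/-- **Boundary quadruple for solenoidal fields** (Theorem `simplequadruple`):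
`(H±, H±, G₋, G₊)` is a boundary quadruple for `j f ↦ −U⁻¹(∂f)` on `j(𝒞_B)`:
(a) `G₋` and `G₊` do not depend on the chosen key representation, (b) they satisfy the
abstract integration by parts identity, and (c) `f ↦ (G₋f, G₊f)` is onto `H± × H±`. -/
theorem stmt_11
    (𝒞 : Subalgebra ℝ C(X, ℝ))
    (act : 𝒞 →ₗ[ℝ] H →ₗ[ℝ] H)
    (hact_one : ∀ v : H, act 1 v = v)
    (hact_symm : ∀ (f : 𝒞) (v w : H), ⟪act f v, w⟫ = ⟪v, act f w⟫)
    (hact_bound : ∀ (f : 𝒞) (v : H), ‖act f v‖ ≤ ‖(f : C(X, ℝ))‖ * ‖v‖)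
    (par : 𝒞 →ₗ[ℝ] H)
    (hLeibniz : ∀ f g : 𝒞, par (f * g) = act f (par g) + act g (par f))
    (B : Set X) (hB : IsClosed B)
    (b : H) (hbne : b ≠ 0)
    (hsol : ∀ φ : 𝒞, ⟪b, par φ⟫ = 0)
    (j : 𝒞 →ₗ[ℝ] H₀) (hjinj : Function.Injective j)
    (hjdense : Dense (⇑j '' {f : 𝒞 | Vanish 𝒞 B f}))
    (U : H₀ ≃ₗᵢ[ℝ] H) (hU : ∀ f : 𝒞, U (j f) = act f b)
    -- resistance-space laws
    (hconst : ∀ f : 𝒞, par f = 0 ↔ ∃ cst : ℝ, ∀ x : X, (f : C(X, ℝ)) x = cst)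
    (hclosedrange : IsClosed ((LinearMap.range par : Submodule ℝ H) : Set H))
    (hNeumann : ∀ (z : H₀) (F : 𝒞 →ₗ[ℝ] ℝ),
      (∀ φ : 𝒞, Vanish 𝒞 B φ → F φ = 0) →
      (∃ C : ℝ, ∀ f : 𝒞, |F f| ≤ C * (‖par f‖ + ‖(f : C(X, ℝ))‖)) →
      F 1 = ⟪z, j 1⟫ →
      ∃ u : 𝒞, ∀ φ : 𝒞, ⟪par u, par φ⟫ = F φ - ⟪z, j φ⟫)
    -- finite boundary data
    (q : ι → X) (hqinj : Function.Injective q) (hBq : B = Set.range q)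
    (ψ : ι → 𝒞)
    (hψ1 : ∀ i, (ψ i : C(X, ℝ)) (q i) = 1)
    (hψ0 : ∀ i i', i ≠ i' → (ψ i : C(X, ℝ)) (q i') = 0)
    (hψharm : ∀ i, ∀ φ : 𝒞, Vanish 𝒞 B φ → ⟪par (ψ i), par φ⟫ = 0)
    -- since `b` is solenoidal, `j(1) ∈ ker ∂^⊥`
    (hjone : KerDperp 𝒞 par U (j 1))
    -- every element of `D(∂_B^⊥)` admits a key representation
    (hrep : ∀ f d : H₀, AdjRel 𝒞 B par j (U f) d →
      ∃ (g u : 𝒞) (w : H₀), KeyRep 𝒞 B par j U f d g u w) :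
    -- (a) independence of the chosen key representation
    (∀ (f d d' : H₀) (g u g' u' : 𝒞) (w w' : H₀),
      KeyRep 𝒞 B par j U f d g u w → KeyRep 𝒞 B par j U f d' g' u' w' →
      Gminus 𝒞 par j U q ψ f d g w = Gminus 𝒞 par j U q ψ f d' g' w' ∧
      Gplus 𝒞 par j U q ψ f d g w = Gplus 𝒞 par j U q ψ f d' g' w') ∧
    -- (b) the abstract integration by parts identity
    (∀ (f₁ f₂ d₁ d₂ : H₀) (g₁ u₁ g₂ u₂ : 𝒞) (w₁ w₂ : H₀),
      KeyRep 𝒞 B par j U f₁ d₁ g₁ u₁ w₁ → KeyRep 𝒞 B par j U f₂ d₂ g₂ u₂ w₂ →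
      ⟪-d₁, f₂⟫ + ⟪f₁, -d₂⟫ =
        ipTilde (Gminus 𝒞 par j U q ψ f₁ d₁ g₁ w₁) (Gminus 𝒞 par j U q ψ f₂ d₂ g₂ w₂) -
        ipTilde (Gplus 𝒞 par j U q ψ f₁ d₁ g₁ w₁) (Gplus 𝒞 par j U q ψ f₂ d₂ g₂ w₂)) ∧
    -- (c) surjectivity onto `H± × H±`
    (∀ y₁ y₂ : (ι → ℝ) × H₀,
      KerDperp 𝒞 par U y₁.2 → ipTilde y₁ (fun _ => (1 : ℝ), -(j 1)) = 0 →
      KerDperp 𝒞 par U y₂.2 → ipTilde y₂ (fun _ => (1 : ℝ), -(j 1)) = 0 →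
      ∃ (f d : H₀) (g u : 𝒞) (w : H₀), KeyRep 𝒞 B par j U f d g u w ∧
        Gminus 𝒞 par j U q ψ f d g w = y₁ ∧ Gplus 𝒞 par j U q ψ f d g w = y₂) := by
  classical
  have hj1 : j 1 ≠ 0 := by
    intro h
    apply hbne
    have := hU 1
    rw [h, map_zero, hact_one] at this
    exact this.symm
  have he := e_ne (ι := ι) (j 1) hj1
  -- integration by parts
  have key : ∀ g φ : 𝒞, ⟪U (j g), par φ⟫ = -⟪U.symm (par g), j φ⟫ := by
    intro g φ
    have h1 : ⟪U.symm (par g), j φ⟫ = ⟪b, act φ (par g)⟫ := by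
      rw [← U.inner_map_map, U.apply_symm_apply, hU, real_inner_comm, hact_symm]
    have h2 := hsol (g * φ)
    rw [hLeibniz, inner_add_right] at h2
    rw [hU, hact_symm, h1]
    linarith
  have hpar1 : par 1 = 0 := (hconst 1).2 ⟨1, fun x => rfl⟩
  -- the normal part
  have hn : ∀ (f d : H₀) (g u : 𝒞) (w : H₀), KeyRep 𝒞 B par j U f d g u w → ∀ φ : 𝒞,
      ⟪U f, par φ⟫ + ⟪-d, j φ⟫ =
        ⟪par u, par φ⟫ + ⟪-d - U.symm (par g), j φ⟫ := by
    rintro f d g u w ⟨h1, h2, h3, h4, h5⟩ φ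
    rw [h4, map_add, map_add, inner_add_left, inner_add_left, h3 φ, key, U.apply_symm_apply,
      inner_sub_left]
    ring
  have hsum : ∀ (f d : H₀) (g u : 𝒞) (w : H₀), KeyRep 𝒞 B par j U f d g u w → ∀ φ : 𝒞,
      ∑ i, (φ : C(X, ℝ)) (q i) * nfb 𝒞 par j U ψ f d i = ⟪U f, par φ⟫ + ⟪-d, j φ⟫ := by
    rintro f d g u w ⟨h1, h2, h3, h4, h5⟩ φ
    have hv : Vanish 𝒞 B (φ - ∑ i, (φ : C(X, ℝ)) (q i) • ψ i) := by
      intro x hx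
      rw [hBq] at hx
      obtain ⟨i, rfl⟩ := hx
      have : ((∑ k, (φ : C(X, ℝ)) (q k) • ψ k : 𝒞) : C(X, ℝ)) (q i) = (φ : C(X, ℝ)) (q i) := by
        rw [AddSubmonoidClass.coe_finset_sum, ContinuousMap.coe_sum, Finset.sum_apply,
          Finset.sum_eq_single i]
        · simp [hψ1]
        · intro k _ hk
          simp [hψ0 k i hk]
        · simp
      simp only [AddSubgroupClass.coe_sub, ContinuousMap.sub_apply, this, sub_self]
    have h := h1 _ hv
    simp only [map_sub, map_sum, map_smul, inner_sub_right, inner_sum, real_inner_smul_right] at h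
    simp only [nfb, mul_add, Finset.sum_add_distrib, inner_neg_left, mul_neg,
      Finset.sum_neg_distrib]
    linarith
  have hperp : ∀ (f d : H₀) (g u : 𝒞) (w : H₀), KeyRep 𝒞 B par j U f d g u w →
      ipTilde (nfb 𝒞 par j U ψ f d, -d - U.symm (par g))
        ((fun _ => (1 : ℝ), -(j 1)) : (ι → ℝ) × H₀) = 0 := by
    intro f d g u w h
    have h1 := hsum f d g u w h 1
    rw [hn f d g u w h, hpar1, inner_zero_right] at h1
    have h2 : ∀ i, ((1 : 𝒞) : C(X, ℝ)) (q i) = 1 := fun i => rfl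
    simp only [h2, one_mul] at h1
    rw [ip_e]
    linarith
  have gm : ∀ (f d : H₀) (g : 𝒞) (w : H₀), Gminus 𝒞 par j U q ψ f d g w =
      (Real.sqrt 2)⁻¹ • projPerp (fun _ => (1 : ℝ), -(j 1))
        (((fun i => (g : C(X, ℝ)) (q i), w) : (ι → ℝ) × H₀) +
          (nfb 𝒞 par j U ψ f d, -d - U.symm (par g))) := fun _ _ _ _ => rfl
  have gp : ∀ (f d : H₀) (g : 𝒞) (w : H₀), Gplus 𝒞 par j U q ψ f d g w =
      (Real.sqrt 2)⁻¹ • projPerp (fun _ => (1 : ℝ), -(j 1))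
        (((fun i => (g : C(X, ℝ)) (q i), w) : (ι → ℝ) × H₀) -
          (nfb 𝒞 par j U ψ f d, -d - U.symm (par g))) := fun _ _ _ _ => rfl
  refine ⟨?_, ?_, ?_⟩
  · rintro f d d' g u g' u' w w' ⟨h1, h2, h3, h4, h5⟩ ⟨h1', h2', h3', h4', h5'⟩
    have hd : d = d' := by
      apply hjdense.eq_of_inner_left ℝ
      rintro _ ⟨φ, hφ, rfl⟩
      rw [← h1 φ hφ, ← h1' φ hφ]
    subst hd
    have hg : par (g' - g) = 0 := by
      apply ker_par_zero (U := U)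
      have := ker_sub h5 h5'
      convert this using 1
      simp only [map_sub]; abel
    obtain ⟨c, hc⟩ := (hconst _).1 hg
    have hgg : g' = g + c • (1 : 𝒞) := by
      apply Subtype.ext
      ext x
      have := hc x
      simp only [AddSubgroupClass.coe_sub, ContinuousMap.sub_apply] at this
      have h1x : ((g + c • (1 : 𝒞) : 𝒞) : C(X, ℝ)) x = (g : C(X, ℝ)) x + c * 1 := rfl
      rw [h1x]
      linarith
    have hpg : par g' = par g := by rw [map_sub] at hg; exact sub_eq_zero.1 hg
    have hu : par (u - u') = 0 := by
      apply ker_par_zero (U := U)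
      have := ker_sub (ker_add (ker_smul c hjone) h3') h3
      convert this using 1
      rw [h4, hgg, map_add, map_smul] at h4'
      have : U.symm (par u) + w = c • j 1 + U.symm (par u') + w' := by
        have h := congrArg (fun t => t - j g) h4'
        calc _ = j g + U.symm (par u) + w - j g := by abel
          _ = _ := by rw [h]; abel
      rw [map_sub, map_sub, eq_sub_iff_add_eq, sub_add_eq_add_sub, this]; abel
    have hpu : par u = par u' := by rw [map_sub] at hu; exact sub_eq_zero.1 hu
    have hw : w' = w - c • j 1 := by
      rw [h4, hgg, map_add, map_smul, hpu] at h4'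
      have h := congrArg (fun t => t - j g - U.symm (par u') - c • j 1) h4'
      calc w' = j g + c • j 1 + U.symm (par u') + w' - j g - U.symm (par u') - c • j 1 := by abel
        _ = _ := by rw [← h]; abel
    have ha : ((fun i => (g' : C(X, ℝ)) (q i), w') : (ι → ℝ) × H₀) =
        (fun i => (g : C(X, ℝ)) (q i), w) + c • (fun _ => (1 : ℝ), -(j 1)) := by
      refine Prod.ext ?_ ?_
      · funext i
        have h1x : (g' : C(X, ℝ)) (q i) = (g : C(X, ℝ)) (q i) + c * 1 := by rw [hgg]; rfl
        exact h1x
      · simp [hw, sub_eq_add_neg]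
    rw [gm, gm, gp, gp, ha, hpg]
    constructor
    · rw [add_right_comm, proj_add_smul _ _ _ he]
    · rw [add_sub_right_comm, proj_add_smul _ _ _ he]
  · intro f₁ f₂ d₁ d₂ g₁ u₁ g₂ u₂ w₁ w₂ k₁ k₂
    rw [gm, gm, gp, gp, quad _ _ _ _ _ he (hperp _ _ _ _ _ k₁) (hperp _ _ _ _ _ k₂)]
    have s₁ := hsum _ _ _ _ _ k₁ g₂
    have s₂ := hsum _ _ _ _ _ k₂ g₁
    rw [hn _ _ _ _ _ k₁] at s₁
    rw [hn _ _ _ _ _ k₂] at s₂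
    rw [ip_comm (nfb 𝒞 par j U ψ f₁ d₁, _)]
    simp only [ipTilde]
    rw [s₁, s₂]
    obtain ⟨-, -, a3, a4, a5⟩ := k₁
    obtain ⟨-, -, b3, b4, b5⟩ := k₂
    obtain ⟨z₁, hz₁⟩ : ∃ z, z = -d₁ - U.symm (par g₁) := ⟨_, rfl⟩
    obtain ⟨z₂, hz₂⟩ : ∃ z, z = -d₂ - U.symm (par g₂) := ⟨_, rfl⟩
    rw [← hz₁] at a5 ⊢
    rw [← hz₂] at b5 ⊢
    have e₁ : -d₁ = U.symm (par g₁) + z₁ := by rw [hz₁]; abel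
    have e₂ : -d₂ = U.symm (par g₂) + z₂ := by rw [hz₂]; abel
    rw [e₁, e₂, a4, b4]
    have t₁ := ker_inner a3 g₂
    have t₂ := ker_inner b3 g₁
    have t₃ := ker_inner a5 u₂
    have t₄ := ker_inner b5 u₁
    have t₅ := key g₁ g₂
    have t₆ : ⟪U (j g₁), par g₂⟫ = ⟪j g₁, U.symm (par g₂)⟫ := by
      rw [← U.inner_map_map (j g₁), U.apply_symm_apply]
    have t₇ : ⟪U.symm (par g₁), U.symm (par u₂)⟫ = ⟪par u₂, par g₁⟫ := by
      rw [U.symm.inner_map_map, real_inner_comm]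
    have t₈ : ⟪U.symm (par u₁), U.symm (par g₂)⟫ = ⟪par u₁, par g₂⟫ := U.symm.inner_map_map _ _
    simp only [inner_add_left, inner_add_right]
    rw [real_inner_comm w₂] at *
    rw [t₁, t₃, t₇, t₈, real_inner_comm z₂ (U.symm (par u₁)), real_inner_comm z₂ (j g₁),
      real_inner_comm w₂ z₁]
    linarith
  · intro y₁ y₂ hy₁ hp₁ hy₂ hp₂
    have hs : (Real.sqrt 2)⁻¹ * (Real.sqrt 2)⁻¹ = 1 / 2 := by
      rw [← mul_inv, Real.mul_self_sqrt (by norm_num)]; norm_num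
    obtain ⟨a, ha⟩ : ∃ a, a = (Real.sqrt 2)⁻¹ • (y₁ + y₂) := ⟨_, rfl⟩
    obtain ⟨c, hc⟩ : ∃ c, c = (Real.sqrt 2)⁻¹ • (y₁ - y₂) := ⟨_, rfl⟩
    have hae : ipTilde a (fun _ => (1 : ℝ), -(j 1)) = 0 := by
      rw [ha, ip_smul_left, ip_add_left, hp₁, hp₂]; simp
    have hce : ipTilde c (fun _ => (1 : ℝ), -(j 1)) = 0 := by
      rw [hc, ip_smul_left, ip_sub_left, hp₁, hp₂]; simp
    have hak : KerDperp 𝒞 par U a.2 := by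
      rw [ha]; exact ker_smul _ (ker_add hy₁ hy₂)
    have hck : KerDperp 𝒞 par U c.2 := by
      rw [hc]; exact ker_smul _ (ker_sub hy₁ hy₂)
    obtain ⟨α, w⟩ := a
    obtain ⟨ν, z⟩ := c
    simp only at hak hck
    rw [ip_e] at hce
    let F : 𝒞 →ₗ[ℝ] ℝ :=
      { toFun := fun φ => ∑ i, ν i * (φ : C(X, ℝ)) (q i)
        map_add' := by
          intro x y
          simp [mul_add, Finset.sum_add_distrib]
        map_smul' := by
          intro r x
          simp [Finset.mul_sum, mul_left_comm] }
    have hF : ∀ φ, F φ = ∑ i, ν i * (φ : C(X, ℝ)) (q i) := fun _ => rfl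
    obtain ⟨u, hu⟩ := hNeumann z F
      (by
        intro φ hφ
        rw [hF]
        refine Finset.sum_eq_zero fun i _ => ?_
        rw [hφ (q i) (by rw [hBq]; exact ⟨i, rfl⟩), mul_zero])
      (by
        refine ⟨∑ i, |ν i|, fun f => ?_⟩
        rw [hF, Finset.sum_mul]
        refine (Finset.abs_sum_le_sum_abs _ _).trans (Finset.sum_le_sum fun i _ => ?_)
        rw [abs_mul]
        refine mul_le_mul_of_nonneg_left ?_ (abs_nonneg _)
        have := (f : C(X, ℝ)).norm_coe_le_norm (q i)
        rw [Real.norm_eq_abs] at this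
        have := norm_nonneg (par f)
        linarith)
      (by
        rw [hF]
        have h2 : ∀ i, ((1 : 𝒞) : C(X, ℝ)) (q i) = 1 := fun i => rfl
        simp only [h2, mul_one]
        linarith)
    obtain ⟨g, hg⟩ : ∃ g : 𝒞, g = ∑ i, α i • ψ i := ⟨_, rfl⟩
    have hgq : ∀ i, (g : C(X, ℝ)) (q i) = α i := by
      intro i
      rw [hg, AddSubmonoidClass.coe_finset_sum, ContinuousMap.coe_sum, Finset.sum_apply,
          Finset.sum_eq_single i]
      · simp [hψ1]
      · intro k _ hk
        simp [hψ0 k i hk]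
      · simp
    have hz : -(-(U.symm (par g)) - z) - U.symm (par g) = z := by abel
    have hUf : ∀ φ, ⟪U (j g + U.symm (par u) + w), par φ⟫ =
        F φ + ⟪-(U.symm (par g)) - z, j φ⟫ := by
      intro φ
      rw [map_add, map_add, inner_add_left, inner_add_left, key, U.apply_symm_apply, hu, hak φ,
        inner_sub_left, inner_neg_left]
      ring
    have hFψ : ∀ i, F (ψ i) = ν i := by
      intro i
      rw [hF, Finset.sum_eq_single i]
      · simp [hψ1]
      · intro k _ hk
        simp [hψ0 i k hk.symm]
      · simp
    have hkr : KeyRep 𝒞 B par j U (j g + U.symm (par u) + w) (-(U.symm (par g)) - z) g u w := by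
      have hFv : ∀ φ, Vanish 𝒞 B φ → F φ = 0 := by
        intro φ hφ
        rw [hF]
        refine Finset.sum_eq_zero fun i _ => ?_
        rw [hφ (q i) (by rw [hBq]; exact ⟨i, rfl⟩), mul_zero]
      refine ⟨?_, ⟨-z, ?_⟩, hak, rfl, ?_⟩
      · intro φ hφ
        rw [hUf, hFv φ hφ, zero_add]
      · intro φ hφ
        rw [hu, hFv φ hφ, inner_neg_left, zero_sub]
      · rw [hz]; exact hck
    have hnν : nfb 𝒞 par j U ψ (j g + U.symm (par u) + w) (-(U.symm (par g)) - z) = ν := by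
      funext i
      rw [nfb, hUf, hFψ, inner_neg_left]
      ring
    have hgα : (fun i => (g : C(X, ℝ)) (q i)) = α := funext hgq
    refine ⟨_, _, g, u, w, hkr, ?_, ?_⟩
    · rw [gm, hnν, hz, hgα, ha, hc, ← smul_add, proj_of_perp, smul_smul, hs]
      · rw [add_add_sub_cancel, ← two_smul ℝ y₁, smul_smul]; norm_num
      · rw [ip_smul_left, ip_add_left, ip_add_left, ip_sub_left, hp₁, hp₂]; simp
    · rw [gp, hnν, hz, hgα, ha, hc, ← smul_sub, proj_of_perp, smul_smul, hs]
      · rw [add_sub_sub_cancel, ← two_smul ℝ y₂, smul_smul]; norm_num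
      · rw [ip_smul_left, ip_sub_left, ip_add_left, ip_sub_left, hp₁, hp₂]; simp

end Stmt11
end

section
/- Distinguished representations, solenoidal case (Lemma 'simpledistinguished'): in the setting of the boundary quadruple for solenoidal b, for every f ∈ D(∂_B^⊥) with key representation f = j g + U^{-1}(∂u) + w and z := ∂_B^⊥ f − U^{-1}(∂g) ∈ ker ∂^⊥, there exists a single constant c ∈ ℝ such that G₋f = (1/√2)·((g(q)+c+n_B(fb)(q))_{q∈B}, w − c·j(1) + z) and G₊f = (1/√2)·((g(q)+c−n_B(fb)(q))_{q∈B}, w − c·j(1) − z), both read as equalities in H̃± (i.e. the orthogonal projections P± in the definition of G₋f and G₊f are simultaneously realized by the shift by c). -/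
open RealInnerProductSpace ContinuousMap

set_option synthInstance.maxHeartbeats 1000000
set_option maxHeartbeats 1000000

namespace Stmt12

variable {X : Type*} [MetricSpace X] [CompactSpace X]
variable {H : Type*} [NormedAddCommGroup H] [InnerProductSpace ℝ H] [CompleteSpace H]
variable {H₀ : Type*} [NormedAddCommGroup H₀] [InnerProductSpace ℝ H₀] [CompleteSpace H₀]
variable {ι : Type*} [Fintype ι]

/-- elements of `𝒞` vanishing on `B`, i.e. membership in `𝒞_B` -/
def Vanish (𝒞 : Subalgebra ℝ C(X, ℝ)) (B : Set X) (f : 𝒞) : Prop :=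
  ∀ x ∈ B, (f : C(X, ℝ)) x = 0

/-- `d` is the value of the adjoint `∂_B^*` at `v ∈ H` -/
def AdjRel (𝒞 : Subalgebra ℝ C(X, ℝ)) (B : Set X) (par : 𝒞 →ₗ[ℝ] H)
    (j : 𝒞 →ₗ[ℝ] H₀) (v : H) (d : H₀) : Prop :=
  ∀ φ : 𝒞, Vanish 𝒞 B φ → ⟪v, par φ⟫ = ⟪d, j φ⟫

/-- membership in `ker ∂^⊥` -/
def KerDperp (𝒞 : Subalgebra ℝ C(X, ℝ)) (par : 𝒞 →ₗ[ℝ] H) (U : H₀ ≃ₗᵢ[ℝ] H) (w : H₀) : Prop :=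
  ∀ φ : 𝒞, ⟪U w, par φ⟫ = 0

/-- a key representation of `f ∈ D(∂_B^⊥)` -/
def KeyRep (𝒞 : Subalgebra ℝ C(X, ℝ)) (B : Set X) (par : 𝒞 →ₗ[ℝ] H)
    (j : 𝒞 →ₗ[ℝ] H₀) (U : H₀ ≃ₗᵢ[ℝ] H) (f d : H₀) (g u : 𝒞) (w : H₀) : Prop :=
  AdjRel 𝒞 B par j (U f) d ∧
  (∃ e : H₀, AdjRel 𝒞 B par j (par u) e) ∧
  KerDperp 𝒞 par U w ∧
  f = j g + U.symm (par u) + w ∧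
  KerDperp 𝒞 par U (-d - U.symm (par g))

/-- the inner product of the boundary space `H̃± = ℝ^B ⊕ ker ∂^⊥` -/
noncomputable def ipTilde (p₁ p₂ : (ι → ℝ) × H₀) : ℝ :=
  (∑ i, p₁.1 i * p₂.1 i) + ⟪p₁.2, p₂.2⟫

/-- the orthogonal projection of `H̃±` onto the orthogonal complement `H±` of the span of `e` -/
noncomputable def projPerp (e x : (ι → ℝ) × H₀) : (ι → ℝ) × H₀ :=
  x - (ipTilde x e / ipTilde e e) • e

/-- the normal part `n_B(fb)` at the boundary point indexed by `i`, where `d = ∂_B^*(U f)` -/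
noncomputable def nfb (𝒞 : Subalgebra ℝ C(X, ℝ)) (par : 𝒞 →ₗ[ℝ] H) (j : 𝒞 →ₗ[ℝ] H₀)
    (U : H₀ ≃ₗᵢ[ℝ] H) (ψ : ι → 𝒞) (f d : H₀) (i : ι) : ℝ :=
  ⟪U f, par (ψ i)⟫ + ⟪-d, j (ψ i)⟫

/-- `G₋ f := (1/√2)·P±((g(q)+n_B(fb)(q))_q, w+z)` -/
noncomputable def Gminus (𝒞 : Subalgebra ℝ C(X, ℝ)) (par : 𝒞 →ₗ[ℝ] H) (j : 𝒞 →ₗ[ℝ] H₀)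
    (U : H₀ ≃ₗᵢ[ℝ] H) (q : ι → X) (ψ : ι → 𝒞) (f d : H₀) (g : 𝒞) (w : H₀) :
    (ι → ℝ) × H₀ :=
  (Real.sqrt 2)⁻¹ •
    projPerp (fun _ => (1 : ℝ), -(j 1))
      ((fun i => (g : C(X, ℝ)) (q i) + nfb 𝒞 par j U ψ f d i),
        w + (-d - U.symm (par g)))

/-- `G₊ f := (1/√2)·P±((g(q)−n_B(fb)(q))_q, w−z)` -/
noncomputable def Gplus (𝒞 : Subalgebra ℝ C(X, ℝ)) (par : 𝒞 →ₗ[ℝ] H) (j : 𝒞 →ₗ[ℝ] H₀)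
    (U : H₀ ≃ₗᵢ[ℝ] H) (q : ι → X) (ψ : ι → 𝒞) (f d : H₀) (g : 𝒞) (w : H₀) :
    (ι → ℝ) × H₀ :=
  (Real.sqrt 2)⁻¹ •
    projPerp (fun _ => (1 : ℝ), -(j 1))
      ((fun i => (g : C(X, ℝ)) (q i) - nfb 𝒞 par j U ψ f d i),
        w - (-d - U.symm (par g)))

/-- **Distinguished representations, solenoidal case** (Lemma `simpledistinguished`): for every
`f ∈ D(∂_B^⊥)` with key representation `(d, g, u, w)` and `z := −d − U⁻¹(∂g)`, there is a single
constant `c ∈ ℝ` realizing both orthogonal projections: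
`G₋f = (1/√2)((g(q)+c+n_B(fb)(q))_q, w − c·j(1) + z)` and
`G₊f = (1/√2)((g(q)+c−n_B(fb)(q))_q, w − c·j(1) − z)`, as equalities in `H̃±`. -/
theorem stmt_12
    (𝒞 : Subalgebra ℝ C(X, ℝ))
    (act : 𝒞 →ₗ[ℝ] H →ₗ[ℝ] H)
    (hact_one : ∀ v : H, act 1 v = v)
    (hact_symm : ∀ (f : 𝒞) (v w : H), ⟪act f v, w⟫ = ⟪v, act f w⟫)
    (hact_bound : ∀ (f : 𝒞) (v : H), ‖act f v‖ ≤ ‖(f : C(X, ℝ))‖ * ‖v‖)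
    (par : 𝒞 →ₗ[ℝ] H)
    (hLeibniz : ∀ f g : 𝒞, par (f * g) = act f (par g) + act g (par f))
    (B : Set X) (hB : IsClosed B)
    (b : H) (hbne : b ≠ 0)
    (hsol : ∀ φ : 𝒞, ⟪b, par φ⟫ = 0)
    (j : 𝒞 →ₗ[ℝ] H₀) (hjinj : Function.Injective j)
    (hjdense : Dense (⇑j '' {f : 𝒞 | Vanish 𝒞 B f}))
    (U : H₀ ≃ₗᵢ[ℝ] H) (hU : ∀ f : 𝒞, U (j f) = act f b)
    -- resistance-space laws
    (hconst : ∀ f : 𝒞, par f = 0 ↔ ∃ cst : ℝ, ∀ x : X, (f : C(X, ℝ)) x = cst)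
    (hclosedrange : IsClosed ((LinearMap.range par : Submodule ℝ H) : Set H))
    -- finite boundary data
    (q : ι → X) (hqinj : Function.Injective q) (hBq : B = Set.range q)
    (ψ : ι → 𝒞)
    (hψ1 : ∀ i, (ψ i : C(X, ℝ)) (q i) = 1)
    (hψ0 : ∀ i i', i ≠ i' → (ψ i : C(X, ℝ)) (q i') = 0)
    (hψharm : ∀ i, ∀ φ : 𝒞, Vanish 𝒞 B φ → ⟪par (ψ i), par φ⟫ = 0)
    -- since `b` is solenoidal, `j(1) ∈ ker ∂^⊥`
    (hjone : KerDperp 𝒞 par U (j 1)) :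
    ∀ (f d : H₀) (g u : 𝒞) (w : H₀),
      KeyRep 𝒞 B par j U f d g u w →
      ∃ c : ℝ,
        Gminus 𝒞 par j U q ψ f d g w =
          (Real.sqrt 2)⁻¹ •
            (((fun i => (g : C(X, ℝ)) (q i) + c + nfb 𝒞 par j U ψ f d i),
              w - c • j 1 + (-d - U.symm (par g))) : (ι → ℝ) × H₀) ∧
        Gplus 𝒞 par j U q ψ f d g w =
          (Real.sqrt 2)⁻¹ •
            (((fun i => (g : C(X, ℝ)) (q i) + c - nfb 𝒞 par j U ψ f d i),
              w - c • j 1 - (-d - U.symm (par g))) : (ι → ℝ) × H₀) := by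
  intro f d g u w hK
  obtain ⟨hd, -, -, -, -⟩ := hK
  have hone : par 1 = 0 := (hconst 1).2 ⟨1, fun x => rfl⟩
  have hvan : Vanish 𝒞 B (1 - ∑ i, ψ i) := by
    intro x hx
    rw [hBq] at hx
    obtain ⟨k, rfl⟩ := hx
    have h1 : ((∑ i, ψ i : 𝒞) : C(X, ℝ)) (q k) = 1 := by
      rw [AddSubmonoidClass.coe_finsetSum, ContinuousMap.sum_apply,
        Finset.sum_eq_single k]
      · exact hψ1 k
      · intro i _ hi
        exact hψ0 i k hi
      · intro h
        exact absurd (Finset.mem_univ k) h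
    have h2 : ((1 - ∑ i, ψ i : 𝒞) : C(X, ℝ)) (q k)
        = 1 - ((∑ i, ψ i : 𝒞) : C(X, ℝ)) (q k) := rfl
    rw [h2, h1, sub_self]
  have hA := hd _ hvan
  rw [map_sub, map_sub, hone, inner_sub_right, inner_sub_right, inner_zero_right,
    map_sum, map_sum, inner_sum, inner_sum] at hA
  have hN : ∑ i, nfb 𝒞 par j U ψ f d i = -⟪d, j 1⟫ := by
    simp only [nfb, inner_neg_left, Finset.sum_add_distrib, Finset.sum_neg_distrib]
    linarith
  have hz0 : ⟪U.symm (par g), j 1⟫ = 0 := by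
    rw [← U.inner_map_map, U.apply_symm_apply, real_inner_comm]
    exact hjone g
  have hz : ⟪-d - U.symm (par g), j 1⟫ = -⟪d, j 1⟫ := by
    rw [inner_sub_left, hz0, inner_neg_left, sub_zero]
  set z := -d - U.symm (par g) with hzdef
  set N := nfb 𝒞 par j U ψ f d with hNdef
  set e : (ι → ℝ) × H₀ := (fun _ => (1 : ℝ), -(j 1)) with he
  have em : ipTilde ((fun i => (g : C(X, ℝ)) (q i) + N i), w + z) e
      = (∑ i, (g : C(X, ℝ)) (q i)) - ⟪w, j 1⟫ := by
    simp only [ipTilde, he, mul_one, Finset.sum_add_distrib, inner_neg_right, inner_add_left]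
    linarith
  have ep : ipTilde ((fun i => (g : C(X, ℝ)) (q i) - N i), w - z) e
      = (∑ i, (g : C(X, ℝ)) (q i)) - ⟪w, j 1⟫ := by
    simp only [ipTilde, he, mul_one, Finset.sum_sub_distrib, inner_neg_right, inner_sub_left]
    linarith
  refine ⟨-(((∑ i, (g : C(X, ℝ)) (q i)) - ⟪w, j 1⟫) / ipTilde e e), ?_, ?_⟩
  · rw [Gminus, ← hzdef, ← hNdef, ← he, projPerp, em]
    congr 1
    refine Prod.ext ?_ ?_
    · funext i
      simp only [he, Prod.fst_sub, Prod.smul_fst, Pi.sub_apply, Pi.smul_apply, smul_eq_mul]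
      ring
    · simp only [he, Prod.snd_sub, Prod.smul_snd]
      module
  · rw [Gplus, ← hzdef, ← hNdef, ← he, projPerp, ep]
    congr 1
    refine Prod.ext ?_ ?_
    · funext i
      simp only [he, Prod.fst_sub, Prod.smul_fst, Pi.sub_apply, Pi.smul_apply, smul_eq_mul]
      ring
    · simp only [he, Prod.snd_sub, Prod.smul_snd]
      module

end Stmt12
end

section
/- Boundary quadruple for divergence free fields (Theorem 'generalquadruple'): suppose b is divergence free with respect to B, B is finite with harmonic partition functions ψ_q, and b = ∂h + v with h ∈ 𝒞 and v orthogonal to ∂(𝒞) is the Hodge decomposition of b. Partition B as B̊ := {q : n_B b(q) = 0}, B̌ := {q : n_B b(q) < 0}, B̂ := {q : n_B b(q) > 0}, and let H̃± := ℝ^{B̊} ⊕ ℝ^{B̌} ⊕ ℝ^{B̂} ⊕ ker ∂^⊥ with inner product Σ_{B̊} F₁F₂ + Σ_{B̌} F₁F₂·|n_B b| + Σ_{B̂} F₁F₂·|n_B b| + ⟨·,·⟩_{H₀}. Let H₋ be the orthogonal complement in H̃± of the span of ((1/√2)𝟏, 𝟏, 0, −(1/√2)U^{-1}v) and H₊ the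 orthogonal complement of the span of ((1/√2)𝟏, 0, −𝟏, −(1/√2)U^{-1}v), with orthogonal projections P₋, P₊. Assume every f ∈ D(∂_B^⊥) admits a key representation f = j g + U^{-1}(∂u) + w with g, u ∈ 𝒞, ∂u ∈ D(∂_B*), w ∈ ker ∂^⊥ and z := ∂_B^⊥ f − U^{-1}(∂g) ∈ ker ∂^⊥, and for such a representation set G₋f := P₋((1/√2)(g+n_B(fb)) on B̊, (du)_B/|n_B b| on B̌, n_B(fb)/|n_B b| on B̂, (1/√2)(w+z)) and G₊f := P₊((1/√2)(g−n_B(fb)) on B̊, n_B(fb)/|n_B b| on B̌, (du)_B/|n_B b| on B̂, (1/√2)(w−z)). Then: (a) G₋f and G₊f do not depend on the chosen key representation; (b) for all f₁, f₂ ∈ D(∂_B^⊥): ⟨∂_B^⊥ f₁, f₂⟩_{H₀} + ⟨f₁, ∂_B^⊥ f₂⟩_{H₀} = ⟨G₋f₁, G₋f₂⟩_{H̃±} − ⟨G₊f₁, G₊f₂⟩_{H̃±}; (c) the map f ↦ (G₋f, G₊f) from D(∂_B^⊥) to H₋ × H₊ is surjective. In other words, (H₋, H₊, G₋, G₊) is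 a boundary quadruple for the operator j f ↦ −U^{-1}(∂f) on j(𝒞_B). -/
open RealInnerProductSpace ContinuousMap

set_option synthInstance.maxHeartbeats 1000000
set_option maxHeartbeats 1000000

namespace Stmt13

variable {X : Type*} [MetricSpace X] [CompactSpace X]
variable {H : Type*} [NormedAddCommGroup H] [InnerProductSpace ℝ H] [CompleteSpace H]
variable {H₀ : Type*} [NormedAddCommGroup H₀] [InnerProductSpace ℝ H₀] [CompleteSpace H₀]
variable {ι : Type*} [Fintype ι]

/-- elements of `𝒞` vanishing on `B`, i.e. membership in `𝒞_B` -/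
def Vanish (𝒞 : Subalgebra ℝ C(X, ℝ)) (B : Set X) (f : 𝒞) : Prop :=
  ∀ x ∈ B, (f : C(X, ℝ)) x = 0

/-- `d` is the value of the adjoint `∂_B^*` at `v ∈ H` -/
def AdjRel (𝒞 : Subalgebra ℝ C(X, ℝ)) (B : Set X) (par : 𝒞 →ₗ[ℝ] H)
    (j : 𝒞 →ₗ[ℝ] H₀) (v : H) (d : H₀) : Prop :=
  ∀ φ : 𝒞, Vanish 𝒞 B φ → ⟪v, par φ⟫ = ⟪d, j φ⟫

/-- membership in `ker ∂^⊥` -/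
def KerDperp (𝒞 : Subalgebra ℝ C(X, ℝ)) (par : 𝒞 →ₗ[ℝ] H) (U : H₀ ≃ₗᵢ[ℝ] H) (w : H₀) : Prop :=
  ∀ φ : 𝒞, ⟪U w, par φ⟫ = 0

/-- a key representation of `f ∈ D(∂_B^⊥)`, recording the adjoint values `d = ∂_B^*(U f)`
and `eu = ∂_B^*(∂u)` -/
def KeyRep (𝒞 : Subalgebra ℝ C(X, ℝ)) (B : Set X) (par : 𝒞 →ₗ[ℝ] H)
    (j : 𝒞 →ₗ[ℝ] H₀) (U : H₀ ≃ₗᵢ[ℝ] H) (f d : H₀) (g u : 𝒞) (eu w : H₀) : Prop :=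
  AdjRel 𝒞 B par j (U f) d ∧
  AdjRel 𝒞 B par j (par u) eu ∧
  KerDperp 𝒞 par U w ∧
  f = j g + U.symm (par u) + w ∧
  KerDperp 𝒞 par U (-d - U.symm (par g))

/-- the normal part `n_B b` at the boundary point indexed by `i` -/
noncomputable def nb (𝒞 : Subalgebra ℝ C(X, ℝ)) (par : 𝒞 →ₗ[ℝ] H) (ψ : ι → 𝒞) (b : H)
    (i : ι) : ℝ :=
  ⟪b, par (ψ i)⟫

/-- the inner product of `H̃± = ℝ^{B̊} ⊕ ℝ^{B̌} ⊕ ℝ^{B̂} ⊕ ker ∂^⊥` (the three boundary pieces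
are encoded as one function on the index set; on `B̌ ∪ B̂` the coordinates are weighted by
`|n_B b|`) -/
noncomputable def ipW (𝒞 : Subalgebra ℝ C(X, ℝ)) (par : 𝒞 →ₗ[ℝ] H) (ψ : ι → 𝒞) (b : H)
    (p₁ p₂ : (ι → ℝ) × H₀) : ℝ :=
  (∑ i, (if nb 𝒞 par ψ b i = 0 then 1 else |nb 𝒞 par ψ b i|) * (p₁.1 i * p₂.1 i)) +
    ⟪p₁.2, p₂.2⟫

/-- the orthogonal projection onto the orthogonal complement of the span of `e` with respect to
the inner product `ip` -/
noncomputable def projWith (ip : ((ι → ℝ) × H₀) → ((ι → ℝ) × H₀) → ℝ)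
    (e x : (ι → ℝ) × H₀) : (ι → ℝ) × H₀ :=
  x - (ip x e / ip e e) • e

/-- the normal part `n_B(fb)` at the boundary point indexed by `i`, where `d = ∂_B^*(U f)` -/
noncomputable def nfb (𝒞 : Subalgebra ℝ C(X, ℝ)) (par : 𝒞 →ₗ[ℝ] H) (j : 𝒞 →ₗ[ℝ] H₀)
    (U : H₀ ≃ₗᵢ[ℝ] H) (ψ : ι → 𝒞) (f d : H₀) (i : ι) : ℝ :=
  ⟪U f, par (ψ i)⟫ + ⟪-d, j (ψ i)⟫

/-- the normal derivative `(du)_B` at the boundary point indexed by `i`, where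
`eu = ∂_B^*(∂u)` -/
noncomputable def duB (𝒞 : Subalgebra ℝ C(X, ℝ)) (par : 𝒞 →ₗ[ℝ] H) (j : 𝒞 →ₗ[ℝ] H₀)
    (ψ : ι → 𝒞) (u : 𝒞) (eu : H₀) (i : ι) : ℝ :=
  ⟪par u, par (ψ i)⟫ - ⟪eu, j (ψ i)⟫

/-- the vector `((1/√2)𝟏, 𝟏, 0, −(1/√2)U⁻¹v)` spanning the complement of `H₋` -/
noncomputable def eMinus (𝒞 : Subalgebra ℝ C(X, ℝ)) (par : 𝒞 →ₗ[ℝ] H) (ψ : ι → 𝒞) (b : H)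
    (U : H₀ ≃ₗᵢ[ℝ] H) (v : H) : (ι → ℝ) × H₀ :=
  (fun i => if nb 𝒞 par ψ b i = 0 then (Real.sqrt 2)⁻¹
    else if nb 𝒞 par ψ b i < 0 then 1 else 0,
   -((Real.sqrt 2)⁻¹ • U.symm v))

/-- the vector `((1/√2)𝟏, 0, −𝟏, −(1/√2)U⁻¹v)` spanning the complement of `H₊` -/
noncomputable def ePlus (𝒞 : Subalgebra ℝ C(X, ℝ)) (par : 𝒞 →ₗ[ℝ] H) (ψ : ι → 𝒞) (b : H)
    (U : H₀ ≃ₗᵢ[ℝ] H) (v : H) : (ι → ℝ) × H₀ :=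
  (fun i => if nb 𝒞 par ψ b i = 0 then (Real.sqrt 2)⁻¹
    else if nb 𝒞 par ψ b i < 0 then 0 else -1,
   -((Real.sqrt 2)⁻¹ • U.symm v))

/-- `G₋f := P₋((1/√2)(g+n_B(fb))` on `B̊`, `(du)_B/|n_B b|` on `B̌`, `n_B(fb)/|n_B b|` on `B̂`,
`(1/√2)(w+z))` -/
noncomputable def Gminus (𝒞 : Subalgebra ℝ C(X, ℝ)) (par : 𝒞 →ₗ[ℝ] H) (j : 𝒞 →ₗ[ℝ] H₀)
    (U : H₀ ≃ₗᵢ[ℝ] H) (q : ι → X) (ψ : ι → 𝒞) (b : H) (v : H)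
    (f d : H₀) (g u : 𝒞) (eu w : H₀) : (ι → ℝ) × H₀ :=
  projWith (ipW 𝒞 par ψ b) (eMinus 𝒞 par ψ b U v)
    ((fun i => if nb 𝒞 par ψ b i = 0 then
        (Real.sqrt 2)⁻¹ * ((g : C(X, ℝ)) (q i) + nfb 𝒞 par j U ψ f d i)
      else if nb 𝒞 par ψ b i < 0 then duB 𝒞 par j ψ u eu i / |nb 𝒞 par ψ b i|
      else nfb 𝒞 par j U ψ f d i / |nb 𝒞 par ψ b i|),
     (Real.sqrt 2)⁻¹ • (w + (-d - U.symm (par g))))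

/-- `G₊f := P₊((1/√2)(g−n_B(fb))` on `B̊`, `n_B(fb)/|n_B b|` on `B̌`, `(du)_B/|n_B b|` on `B̂`,
`(1/√2)(w−z))` -/
noncomputable def Gplus (𝒞 : Subalgebra ℝ C(X, ℝ)) (par : 𝒞 →ₗ[ℝ] H) (j : 𝒞 →ₗ[ℝ] H₀)
    (U : H₀ ≃ₗᵢ[ℝ] H) (q : ι → X) (ψ : ι → 𝒞) (b : H) (v : H)
    (f d : H₀) (g u : 𝒞) (eu w : H₀) : (ι → ℝ) × H₀ :=
  projWith (ipW 𝒞 par ψ b) (ePlus 𝒞 par ψ b U v)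
    ((fun i => if nb 𝒞 par ψ b i = 0 then
        (Real.sqrt 2)⁻¹ * ((g : C(X, ℝ)) (q i) - nfb 𝒞 par j U ψ f d i)
      else if nb 𝒞 par ψ b i < 0 then nfb 𝒞 par j U ψ f d i / |nb 𝒞 par ψ b i|
      else duB 𝒞 par j ψ u eu i / |nb 𝒞 par ψ b i|),
     (Real.sqrt 2)⁻¹ • (w - (-d - U.symm (par g))))

set_option linter.unusedSectionVars false

theorem ipW_pos (𝒞 : Subalgebra ℝ C(X, ℝ)) (par : 𝒞 →ₗ[ℝ] H) (ψ : ι → 𝒞) (b : H)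
    (e : (ι → ℝ) × H₀) (h : ipW 𝒞 par ψ b e e = 0) : e = 0 := by
  unfold ipW at h
  have hw : ∀ i, 0 < (if nb 𝒞 par ψ b i = 0 then 1 else |nb 𝒞 par ψ b i|) := by
    intro i
    split_ifs with h0
    · norm_num
    · exact abs_pos.mpr h0
  have h1 : ∀ i ∈ Finset.univ, 0 ≤ (if nb 𝒞 par ψ b i = 0 then 1 else |nb 𝒞 par ψ b i|) * (e.1 i * e.1 i) :=
    fun i _ => mul_nonneg (hw i).le (mul_self_nonneg _)
  have h2 : 0 ≤ ⟪e.2, e.2⟫ := real_inner_self_nonneg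
  have h3 := Finset.sum_nonneg h1
  have h4 : ⟪e.2, e.2⟫ = 0 := by linarith
  have h5 := (Finset.sum_eq_zero_iff_of_nonneg h1).1 (by linarith)
  refine Prod.ext ?_ (inner_self_eq_zero.1 h4)
  funext i
  have := h5 i (Finset.mem_univ i)
  rcases mul_eq_zero.1 this with h6 | h6
  · exact absurd h6 (hw i).ne'
  · simpa using h6

theorem ipW_add_left (𝒞 : Subalgebra ℝ C(X, ℝ)) (par : 𝒞 →ₗ[ℝ] H) (ψ : ι → 𝒞) (b : H)
    (x y z : (ι → ℝ) × H₀) : ipW 𝒞 par ψ b (x + y) z = ipW 𝒞 par ψ b x z + ipW 𝒞 par ψ b y z := by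
  unfold ipW
  simp only [Prod.fst_add, Prod.snd_add, Pi.add_apply, inner_add_left, add_mul, mul_add,
    Finset.sum_add_distrib]
  ring

theorem ipW_smul_left (𝒞 : Subalgebra ℝ C(X, ℝ)) (par : 𝒞 →ₗ[ℝ] H) (ψ : ι → 𝒞) (b : H)
    (c : ℝ) (x z : (ι → ℝ) × H₀) : ipW 𝒞 par ψ b (c • x) z = c * ipW 𝒞 par ψ b x z := by
  unfold ipW
  simp only [Prod.smul_fst, Prod.smul_snd, Pi.smul_apply, smul_eq_mul, real_inner_smul_left, mul_add,
    Finset.mul_sum]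
  congr 1
  exact Finset.sum_congr rfl fun i _ => by ring

theorem ipW_symm (𝒞 : Subalgebra ℝ C(X, ℝ)) (par : 𝒞 →ₗ[ℝ] H) (ψ : ι → 𝒞) (b : H)
    (x z : (ι → ℝ) × H₀) : ipW 𝒞 par ψ b x z = ipW 𝒞 par ψ b z x := by
  unfold ipW
  rw [real_inner_comm]
  congr 1
  exact Finset.sum_congr rfl fun i _ => by ring

theorem ipW_proj (𝒞 : Subalgebra ℝ C(X, ℝ)) (par : 𝒞 →ₗ[ℝ] H) (ψ : ι → 𝒞) (b : H)
    (e x y : (ι → ℝ) × H₀) :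
    ipW 𝒞 par ψ b (projWith (ipW 𝒞 par ψ b) e x) (projWith (ipW 𝒞 par ψ b) e y) =
      ipW 𝒞 par ψ b x y - ipW 𝒞 par ψ b x e * ipW 𝒞 par ψ b y e / ipW 𝒞 par ψ b e e := by
  unfold projWith
  simp only [sub_eq_add_neg, ← neg_smul]
  rw [ipW_add_left, ipW_smul_left, ipW_symm _ _ _ _ x, ipW_symm _ _ _ _ e (_ + _), ipW_add_left,
    ipW_add_left, ipW_smul_left, ipW_smul_left, ipW_symm _ _ _ _ e x, ipW_symm _ _ _ _ y x]
  by_cases h : ipW 𝒞 par ψ b e e = 0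
  · simp [h]
  · field_simp
    ring

theorem proj_add (𝒞 : Subalgebra ℝ C(X, ℝ)) (par : 𝒞 →ₗ[ℝ] H) (ψ : ι → 𝒞) (b : H)
    (e x y : (ι → ℝ) × H₀) (c : ℝ) (hxy : x = y + c • e) :
    projWith (ipW 𝒞 par ψ b) e x = projWith (ipW 𝒞 par ψ b) e y := by
  unfold projWith
  rw [hxy, ipW_add_left, ipW_smul_left]
  by_cases h : ipW 𝒞 par ψ b e e = 0
  · rw [ipW_pos 𝒞 par ψ b e h]; simp
  · have : (ipW 𝒞 par ψ b y e + c * ipW 𝒞 par ψ b e e) / ipW 𝒞 par ψ b e e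
      = ipW 𝒞 par ψ b y e / ipW 𝒞 par ψ b e e + c := by field_simp
    rw [this, add_smul]
    abel

theorem proj_id (𝒞 : Subalgebra ℝ C(X, ℝ)) (par : 𝒞 →ₗ[ℝ] H) (ψ : ι → 𝒞) (b : H)
    (e x : (ι → ℝ) × H₀) (h : ipW 𝒞 par ψ b x e = 0) :
    projWith (ipW 𝒞 par ψ b) e x = x := by
  unfold projWith
  rw [h]; simp

/-- **Boundary quadruple for divergence free fields** (Theorem `generalquadruple`):
`(H₋, H₊, G₋, G₊)` is a boundary quadruple for `j f ↦ −U⁻¹(∂f)` on `j(𝒞_B)`: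
(a) `G₋` and `G₊` do not depend on the chosen key representation, (b) they satisfy the
abstract integration by parts identity, and (c) `f ↦ (G₋f, G₊f)` is onto `H₋ × H₊`. -/
theorem stmt_13
    (𝒞 : Subalgebra ℝ C(X, ℝ))
    (act : 𝒞 →ₗ[ℝ] H →ₗ[ℝ] H)
    (hact_one : ∀ v : H, act 1 v = v)
    (hact_symm : ∀ (f : 𝒞) (v w : H), ⟪act f v, w⟫ = ⟪v, act f w⟫)
    (hact_bound : ∀ (f : 𝒞) (v : H), ‖act f v‖ ≤ ‖(f : C(X, ℝ))‖ * ‖v‖)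
    (par : 𝒞 →ₗ[ℝ] H)
    (hLeibniz : ∀ f g : 𝒞, par (f * g) = act f (par g) + act g (par f))
    (B : Set X) (hB : IsClosed B)
    (b : H) (hbne : b ≠ 0)
    (hdivfree : ∀ φ : 𝒞, Vanish 𝒞 B φ → ⟪b, par φ⟫ = 0)
    (j : 𝒞 →ₗ[ℝ] H₀) (hjinj : Function.Injective j)
    (hjdense : Dense (⇑j '' {f : 𝒞 | Vanish 𝒞 B f}))
    (U : H₀ ≃ₗᵢ[ℝ] H) (hU : ∀ f : 𝒞, U (j f) = act f b)
    -- resistance-space laws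
    (hconst : ∀ f : 𝒞, par f = 0 ↔ ∃ cst : ℝ, ∀ x : X, (f : C(X, ℝ)) x = cst)
    (hclosedrange : IsClosed ((LinearMap.range par : Submodule ℝ H) : Set H))
    (hNeumann : ∀ (z : H₀) (F : 𝒞 →ₗ[ℝ] ℝ),
      (∀ φ : 𝒞, Vanish 𝒞 B φ → F φ = 0) →
      (∃ C : ℝ, ∀ f : 𝒞, |F f| ≤ C * (‖par f‖ + ‖(f : C(X, ℝ))‖)) →
      F 1 = ⟪z, j 1⟫ →
      ∃ u : 𝒞, ∀ φ : 𝒞, ⟪par u, par φ⟫ = F φ - ⟪z, j φ⟫)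
    -- the Hodge decomposition `b = ∂h + v`
    (hh : 𝒞) (v : H) (hHodge : b = par hh + v) (hv : ∀ φ : 𝒞, ⟪v, par φ⟫ = 0)
    -- finite boundary data
    (q : ι → X) (hqinj : Function.Injective q) (hBq : B = Set.range q)
    (ψ : ι → 𝒞)
    (hψ1 : ∀ i, (ψ i : C(X, ℝ)) (q i) = 1)
    (hψ0 : ∀ i i', i ≠ i' → (ψ i : C(X, ℝ)) (q i') = 0)
    (hψharm : ∀ i, ∀ φ : 𝒞, Vanish 𝒞 B φ → ⟪par (ψ i), par φ⟫ = 0)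
    -- every element of `D(∂_B^⊥)` admits a key representation
    (hrep : ∀ f d : H₀, AdjRel 𝒞 B par j (U f) d →
      ∃ (g u : 𝒞) (eu w : H₀), KeyRep 𝒞 B par j U f d g u eu w) :
    -- (a) independence of the chosen key representation
    (∀ (f d d' : H₀) (g u : 𝒞) (eu w : H₀) (g' u' : 𝒞) (eu' w' : H₀),
      KeyRep 𝒞 B par j U f d g u eu w → KeyRep 𝒞 B par j U f d' g' u' eu' w' →
      Gminus 𝒞 par j U q ψ b v f d g u eu w = Gminus 𝒞 par j U q ψ b v f d' g' u' eu' w' ∧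
      Gplus 𝒞 par j U q ψ b v f d g u eu w = Gplus 𝒞 par j U q ψ b v f d' g' u' eu' w') ∧
    -- (b) the abstract integration by parts identity
    (∀ (f₁ f₂ d₁ d₂ : H₀) (g₁ u₁ : 𝒞) (eu₁ w₁ : H₀) (g₂ u₂ : 𝒞) (eu₂ w₂ : H₀),
      KeyRep 𝒞 B par j U f₁ d₁ g₁ u₁ eu₁ w₁ → KeyRep 𝒞 B par j U f₂ d₂ g₂ u₂ eu₂ w₂ →
      ⟪-d₁, f₂⟫ + ⟪f₁, -d₂⟫ =
        ipW 𝒞 par ψ b (Gminus 𝒞 par j U q ψ b v f₁ d₁ g₁ u₁ eu₁ w₁)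
          (Gminus 𝒞 par j U q ψ b v f₂ d₂ g₂ u₂ eu₂ w₂) -
        ipW 𝒞 par ψ b (Gplus 𝒞 par j U q ψ b v f₁ d₁ g₁ u₁ eu₁ w₁)
          (Gplus 𝒞 par j U q ψ b v f₂ d₂ g₂ u₂ eu₂ w₂)) ∧
    -- (c) surjectivity onto `H₋ × H₊`
    (∀ y₁ y₂ : (ι → ℝ) × H₀,
      KerDperp 𝒞 par U y₁.2 → ipW 𝒞 par ψ b y₁ (eMinus 𝒞 par ψ b U v) = 0 →
      KerDperp 𝒞 par U y₂.2 → ipW 𝒞 par ψ b y₂ (ePlus 𝒞 par ψ b U v) = 0 →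
      ∃ (f d : H₀) (g u : 𝒞) (eu w : H₀), KeyRep 𝒞 B par j U f d g u eu w ∧
        Gminus 𝒞 par j U q ψ b v f d g u eu w = y₁ ∧
        Gplus 𝒞 par j U q ψ b v f d g u eu w = y₂) := by
  have hc2 : (Real.sqrt 2)⁻¹ * (Real.sqrt 2)⁻¹ = 1/2 := by
    rw [← mul_inv, Real.mul_self_sqrt (by norm_num)]; norm_num
  generalize hr : (Real.sqrt 2)⁻¹ = r at hc2
  have hrne : r ≠ 0 := by rintro rfl; norm_num at hc2
  have hdu : ∀ x : H₀, (∀ φ : 𝒞, Vanish 𝒞 B φ → ⟪x, j φ⟫ = 0) → x = 0 := by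
    intro x hx
    refine hjdense.eq_zero_of_inner_left ℝ ?_
    rintro _ ⟨φ, hφ, rfl⟩
    exact hx φ hφ
  have hpar1 : par 1 = 0 := (hconst 1).2 ⟨1, fun x => rfl⟩
  -- expansion of functionals vanishing on `𝒞_B`
  have hexp : ∀ F : 𝒞 →ₗ[ℝ] ℝ, (∀ φ, Vanish 𝒞 B φ → F φ = 0) →
      ∀ φ : 𝒞, F φ = ∑ i, (φ : C(X, ℝ)) (q i) * F (ψ i) := by
    intro F hF φ
    have h := hF (φ - ∑ i, (φ : C(X, ℝ)) (q i) • ψ i) ?_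
    · rw [map_sub, map_sum] at h
      simp only [map_smul, smul_eq_mul] at h
      linarith
    · rw [hBq]
      rintro _ ⟨k, rfl⟩
      classical
      have : ∀ i, (ψ i : C(X, ℝ)) (q k) = if i = k then 1 else 0 := by
        intro i
        split_ifs with h
        · rw [h, hψ1]
        · exact hψ0 i k h
      simp [ContinuousMap.sum_apply, this]
  have hadj : ∀ (a : H) (d : H₀), AdjRel 𝒞 B par j a d → ∀ φ : 𝒞,
      ⟪a, par φ⟫ - ⟪d, j φ⟫ = ∑ i, (φ : C(X, ℝ)) (q i) * (⟪a, par (ψ i)⟫ - ⟪d, j (ψ i)⟫) := by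
    intro a d h φ
    exact hexp ((innerₛₗ ℝ a) ∘ₗ par - (innerₛₗ ℝ d) ∘ₗ j)
      (fun φ hφ => by simp [h φ hφ]) φ
  have hbexp : ∀ φ : 𝒞, ⟪b, par φ⟫ = ∑ i, (φ : C(X, ℝ)) (q i) * nb 𝒞 par ψ b i := by
    intro φ
    exact hexp ((innerₛₗ ℝ b) ∘ₗ par) (fun φ hφ => by simp [hdivfree φ hφ]) φ
  have hUs : ∀ (x : H₀) (y : H), ⟪x, U.symm y⟫ = ⟪U x, y⟫ := by
    intro x y
    rw [← U.inner_map_map, U.apply_symm_apply]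
  have hUs' : ∀ (x : H₀) (y : H), ⟪U.symm y, x⟫ = ⟪y, U x⟫ := by
    intro x y
    rw [← U.inner_map_map, U.apply_symm_apply]
  have hprod : ∀ g φ : 𝒞, ⟪U (j g), par φ⟫ + ⟪U (j φ), par g⟫ =
      ∑ i, (g : C(X, ℝ)) (q i) * (φ : C(X, ℝ)) (q i) * nb 𝒞 par ψ b i := by
    intro g φ
    rw [hU, hU, hact_symm, hact_symm, ← inner_add_right, ← hLeibniz, hbexp]
    simp
  have hj1 : ∀ z : H₀, KerDperp 𝒞 par U z → ⟪z, j 1⟫ = ⟪z, U.symm v⟫ := by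
    intro z hz
    rw [hUs, ← U.inner_map_map, hU, hact_one, hHodge, inner_add_right, hz, zero_add]
  have hsn : ∑ i, nb 𝒞 par ψ b i = 0 := by
    have := hbexp 1
    rw [hpar1, inner_zero_right] at this
    simpa using this.symm
  have hkey : ∀ (f d : H₀) (g u : 𝒞) (eu w : H₀), KeyRep 𝒞 B par j U f d g u eu w →
      eu = -(-d - U.symm (par g)) ∧
      (∀ i, nfb 𝒞 par j U ψ f d i = (g : C(X, ℝ)) (q i) * nb 𝒞 par ψ b i + duB 𝒞 par j ψ u eu i) ∧
      (∀ φ : 𝒞, ⟪U f, par φ⟫ + ⟪-d, j φ⟫ = ∑ i, (φ : C(X, ℝ)) (q i) * nfb 𝒞 par j U ψ f d i) ∧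
      ∑ i, duB 𝒞 par j ψ u eu i = ⟪-d - U.symm (par g), U.symm v⟫ := by
    rintro f d g u eu w ⟨h1, h2, h3, h4, h5⟩
    have hgen : ∀ φ : 𝒞, ⟪U f, par φ⟫ + ⟪-d, j φ⟫ =
        (∑ i, (g : C(X, ℝ)) (q i) * (φ : C(X, ℝ)) (q i) * nb 𝒞 par ψ b i) + ⟪par u, par φ⟫
          + ⟪-d - U.symm (par g), j φ⟫ := by
      intro φ
      rw [← hprod, h4]
      simp only [map_add, inner_add_left, inner_sub_left, U.apply_symm_apply, hUs', h3 φ]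
      rw [real_inner_comm (par g)]
      ring
    have heu : eu = -(-d - U.symm (par g)) := by
      rw [← sub_eq_zero]
      apply hdu
      intro φ hφ
      have e1 := hgen φ
      have e2 := h1 φ hφ
      have e3 := h2 φ hφ
      have e4 : ∑ i, (g : C(X, ℝ)) (q i) * (φ : C(X, ℝ)) (q i) * nb 𝒞 par ψ b i = 0 :=
        Finset.sum_eq_zero fun i _ => by
          rw [hφ (q i) (by rw [hBq]; exact ⟨i, rfl⟩)]; ring
      rw [e4] at e1
      rw [inner_sub_left, inner_neg_left (-d - _)]
      rw [inner_neg_left] at e1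
      linarith
    refine ⟨heu, ?_, ?_, ?_⟩
    · intro i
      have e1 := hgen (ψ i)
      unfold nfb duB
      rw [e1, Finset.sum_eq_single i, hψ1, heu, inner_neg_left]
      · ring
      · intro k _ hk
        rw [hψ0 i k hk.symm]; ring
      · simp
    · intro φ
      have := hadj (U f) d h1 φ
      unfold nfb
      simp only [inner_neg_left, ← sub_eq_add_neg]
      exact this
    · have e1 := hadj (par u) eu h2 1
      rw [hpar1, inner_zero_right, heu, inner_neg_left, hj1 _ h5] at e1
      rw [zero_sub, neg_neg] at e1
      rw [e1, heu]
      unfold duB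
      simp
  -- norms of the two spanning vectors agree
  have hee : ipW 𝒞 par ψ b (eMinus 𝒞 par ψ b U v) (eMinus 𝒞 par ψ b U v) =
      ipW 𝒞 par ψ b (ePlus 𝒞 par ψ b U v) (ePlus 𝒞 par ψ b U v) := by
    unfold ipW eMinus ePlus
    simp only
    congr 1
    rw [← sub_eq_zero, ← Finset.sum_sub_distrib, ← neg_eq_zero, ← Finset.sum_neg_distrib]
    refine Eq.trans ?_ hsn
    refine Finset.sum_congr rfl fun i _ => ?_
    split_ifs with h0 h1
    · rw [h0]; ring
    · rw [abs_of_neg h1]; ring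
    · rw [abs_of_nonneg (not_lt.1 h1)]; ring
  refine ⟨?_, ?_, ?_⟩
  · intro f d d' g u eu w g' u' eu' w' K K'
    obtain ⟨k1, k2, k3, k4⟩ := hkey _ _ _ _ _ _ K
    obtain ⟨k1', k2', k3', k4'⟩ := hkey _ _ _ _ _ _ K'
    obtain ⟨a1, a2, a3, a4, a5⟩ := K
    obtain ⟨b1, b2, b3, b4, b5⟩ := K'
    have hd : d' = d := by
      rw [← sub_eq_zero]
      apply hdu
      intro φ hφ
      rw [inner_sub_left, ← a1 φ hφ, ← b1 φ hφ, sub_self]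
    subst hd
    have hpg : par (g - g') = 0 := by
      rw [← inner_self_eq_zero (𝕜 := ℝ)]
      have e1 := a5 (g - g')
      have e2 := b5 (g - g')
      simp only [map_sub, U.apply_symm_apply, inner_sub_left] at e1 e2 ⊢
      linarith
    obtain ⟨c, hc⟩ := (hconst _).1 hpg
    have hgc : g = g' + c • (1 : 𝒞) := by
      rw [← sub_eq_iff_eq_add']
      ext x
      rw [hc x]; simp
    have hpgg : par g = par g' := by rw [← sub_eq_zero, ← map_sub, hpg]
    have hb0 : c • b + par (u - u') + U (w - w') = 0 := by
      have e1 : U (j g + U.symm (par u) + w) = U (j g' + U.symm (par u') + w') := by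
        rw [← a4, ← b4]
      rw [hgc] at e1
      simp only [map_add, map_smul, U.apply_symm_apply, hU, hact_one, map_sub] at e1 ⊢
      rw [← sub_eq_zero] at e1
      rw [← e1]; abel
    have hpu : par (u - u' + c • hh) = 0 := by
      have e1 : par (u - u' + c • hh) = - (c • v + U (w - w')) := by
        rw [hHodge] at hb0
        rw [← sub_eq_zero, ← hb0]
        simp only [map_add, map_smul, map_sub, smul_add]; abel
      rw [← inner_self_eq_zero (𝕜 := ℝ)]
      nth_rewrite 1 [e1]
      rw [inner_neg_left, inner_add_left, real_inner_smul_left, hv, map_sub, inner_sub_left, a3, b3]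
      simp
    have hww : w = w' + c • (- U.symm v) := by
      apply U.injective
      rw [map_add, map_smul, map_neg, U.apply_symm_apply, ← sub_eq_zero, ← hb0]
      have e1 : par (u - u') = - (c • par hh) := by
        rw [map_add, map_smul] at hpu
        exact eq_neg_of_add_eq_zero_left hpu
      rw [e1, hHodge, map_sub, smul_add]; 
      simp only [smul_neg]; abel
    have hgq : ∀ i, (g : C(X, ℝ)) (q i) = (g' : C(X, ℝ)) (q i) + c := by
      intro i; rw [hgc]; simp
    have hδ : ∀ i, duB 𝒞 par j ψ u eu i = duB 𝒞 par j ψ u' eu' i - c * nb 𝒞 par ψ b i := by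
      intro i
      have := k2 i
      rw [k2' i, hgq] at this
      linarith
    constructor
    · apply proj_add 𝒞 par ψ b _ _ _ c
      rw [hpgg, hww]
      unfold eMinus
      rw [hr]
      refine Prod.ext ?_ ?_
      · funext i
        simp only [Prod.fst_add, Prod.smul_fst, Pi.add_apply, Pi.smul_apply, smul_eq_mul]
        split_ifs with h0 h1
        · rw [hgq]; ring
        · rw [hδ, abs_of_neg h1]; field_simp; ring
        · ring
      · simp only [Prod.snd_add, Prod.smul_snd]
        module
    · apply proj_add 𝒞 par ψ b _ _ _ c
      rw [hpgg, hww]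
      unfold ePlus
      rw [hr]
      refine Prod.ext ?_ ?_
      · funext i
        simp only [Prod.fst_add, Prod.smul_fst, Pi.add_apply, Pi.smul_apply, smul_eq_mul]
        split_ifs with h0 h1
        · rw [hgq]; ring
        · ring
        · rw [hδ, abs_of_nonneg (not_lt.1 h1)]; field_simp; ring
      · simp only [Prod.snd_add, Prod.smul_snd]
        module
  · -- the pairing with the spanning vectors agrees
    have hxe : ∀ (f d : H₀) (g u : 𝒞) (eu w : H₀), KeyRep 𝒞 B par j U f d g u eu w →
        ipW 𝒞 par ψ b ((fun i => if nb 𝒞 par ψ b i = 0 then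
            r * ((g : C(X, ℝ)) (q i) + nfb 𝒞 par j U ψ f d i)
          else if nb 𝒞 par ψ b i < 0 then duB 𝒞 par j ψ u eu i / |nb 𝒞 par ψ b i|
          else nfb 𝒞 par j U ψ f d i / |nb 𝒞 par ψ b i|),
          r • (w + (-d - U.symm (par g)))) (eMinus 𝒞 par ψ b U v) =
        ipW 𝒞 par ψ b ((fun i => if nb 𝒞 par ψ b i = 0 then
            r * ((g : C(X, ℝ)) (q i) - nfb 𝒞 par j U ψ f d i)
          else if nb 𝒞 par ψ b i < 0 then nfb 𝒞 par j U ψ f d i / |nb 𝒞 par ψ b i|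
          else duB 𝒞 par j ψ u eu i / |nb 𝒞 par ψ b i|),
          r • (w - (-d - U.symm (par g)))) (ePlus 𝒞 par ψ b U v) := by
      intro f d g u eu w K
      obtain ⟨k1, k2, k3, k4⟩ := hkey _ _ _ _ _ _ K
      generalize -d - U.symm (par g) = z at *
      unfold ipW eMinus ePlus
      rw [hr]
      simp only [inner_neg_right, real_inner_smul_left, real_inner_smul_right, inner_add_left,
        inner_sub_left]
      rw [← sub_eq_zero]
      have : ∀ S T a c : ℝ, S - T = c → S + -(r * (r * (a + c))) - (T + -(r * (r * (a - c)))) = 0 := by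
        intro S T a c h
        linear_combination h - 2 * c * hc2
      apply this
      rw [← k4, ← Finset.sum_sub_distrib]
      refine Finset.sum_congr rfl fun i _ => ?_
      have := k2 i
      split_ifs with h0 h1
      · rw [h0] at this
        rw [this]
        linear_combination 2 * duB 𝒞 par j ψ u eu i * hc2
      · have := abs_pos.2 h0
        field_simp; ring
      · have := abs_pos.2 h0
        field_simp; ring
    intro f₁ f₂ d₁ d₂ g₁ u₁ eu₁ w₁ g₂ u₂ eu₂ w₂ K₁ K₂
    unfold Gminus Gplus
    rw [hr, ipW_proj, ipW_proj, hxe _ _ _ _ _ _ K₁, hxe _ _ _ _ _ _ K₂, hee, sub_sub_sub_cancel_right]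
    obtain ⟨k1, k2, k3, k4⟩ := hkey _ _ _ _ _ _ K₁
    obtain ⟨k1', k2', k3', k4'⟩ := hkey _ _ _ _ _ _ K₂
    obtain ⟨a1, a2, a3, a4, a5⟩ := K₁
    obtain ⟨b1, b2, b3, b4, b5⟩ := K₂
    have hL : ⟪-d₁, f₂⟫ + ⟪f₁, -d₂⟫ =
        (∑ i, ((g₂ : C(X, ℝ)) (q i) * nfb 𝒞 par j U ψ f₁ d₁ i
          + (g₁ : C(X, ℝ)) (q i) * nfb 𝒞 par j U ψ f₂ d₂ i
          - (g₁ : C(X, ℝ)) (q i) * (g₂ : C(X, ℝ)) (q i) * nb 𝒞 par ψ b i))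
        + (⟪w₁, -d₂ - U.symm (par g₂)⟫ + ⟪-d₁ - U.symm (par g₁), w₂⟫) := by
      rw [Finset.sum_sub_distrib, Finset.sum_add_distrib, ← k3, ← k3', ← hprod]
      have e1 : ⟪-d₁, f₂⟫ = ⟪-d₁, j g₂⟫ + ⟪-d₁, U.symm (par u₂)⟫ + ⟪-d₁, w₂⟫ := by
        rw [← inner_add_right, ← inner_add_right, ← b4]
      have e2 : ⟪f₁, -d₂⟫ = ⟪-d₂, j g₁⟫ + ⟪-d₂, U.symm (par u₁)⟫ + ⟪-d₂, w₁⟫ := by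
        rw [← inner_add_right, ← inner_add_right, ← a4, real_inner_comm]
      have e3 := a5 u₂
      have e4 := b5 u₁
      have e5 := a3 g₂
      have e6 := b3 g₁
      have e7 : ⟪U f₁, par g₂⟫ = ⟪U (j g₁), par g₂⟫ + ⟪par u₁, par g₂⟫ := by
        rw [a4]
        simp only [map_add, inner_add_left, U.apply_symm_apply, e5, add_zero]
      have e8 : ⟪U f₂, par g₁⟫ = ⟪U (j g₂), par g₁⟫ + ⟪par u₂, par g₁⟫ := by
        rw [b4]
        simp only [map_add, inner_add_left, U.apply_symm_apply, e6, add_zero]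
      rw [← hUs, inner_sub_left, hUs' _ (par g₁), U.apply_symm_apply] at e3
      rw [← hUs, inner_sub_left, hUs' _ (par g₂), U.apply_symm_apply] at e4
      rw [real_inner_comm] at e5 e6
      rw [e1, e2, e7, e8, real_inner_comm _ w₁, inner_sub_left, inner_sub_left, hUs', hUs', e5, e6,
        real_inner_comm (par g₁) (par u₂), real_inner_comm (par g₂) (par u₁)]
      linear_combination e3 + e4
    rw [hL]
    generalize -d₁ - U.symm (par g₁) = z₁ at *
    generalize -d₂ - U.symm (par g₂) = z₂ at *
    unfold ipW
    simp only [real_inner_smul_left, real_inner_smul_right, inner_add_left,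
        inner_sub_left, inner_add_right, inner_sub_right]
    rw [add_sub_add_comm, ← Finset.sum_sub_distrib]
    congr 1
    · refine Finset.sum_congr rfl fun i _ => ?_
      have e1 := k2 i
      have e2 := k2' i
      generalize nfb 𝒞 par j U ψ f₁ d₁ i = β₁ at *
      generalize nfb 𝒞 par j U ψ f₂ d₂ i = β₂ at *
      generalize nb 𝒞 par ψ b i = n at *
      split_ifs with h0 h1
      · rw [h0]
        generalize (g₁ : C(X, ℝ)) (q i) = x at *
        generalize (g₂ : C(X, ℝ)) (q i) = y at *
        linear_combination (-2 * (x * β₂ + y * β₁)) * hc2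
      · rw [abs_of_neg h1, e1, e2]
        field_simp
        ring
      · rw [abs_of_nonneg (not_lt.1 h1), e1, e2]
        field_simp
        ring
    · linear_combination (-2 * (⟪w₁, z₂⟫ + ⟪z₁, w₂⟫)) * hc2
  · intro y₁ y₂ hk₁ ho₁ hk₂ ho₂
    set n := nb 𝒞 par ψ b with hn
    set δ : ι → ℝ := fun i => if n i = 0 then r * (y₁.1 i - y₂.1 i) else
      if n i < 0 then |n i| * y₁.1 i else |n i| * y₂.1 i with hδ
    set γ : ι → ℝ := fun i => if n i = 0 then r * (y₁.1 i + y₂.1 i) else y₁.1 i - y₂.1 i with hγ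
    set z : H₀ := r • (y₁.2 - y₂.2) with hz
    set w : H₀ := r • (y₁.2 + y₂.2) with hw
    have hkz : KerDperp 𝒞 par U z := by
      intro φ
      rw [hz, map_smul, map_sub, real_inner_smul_left, inner_sub_left, hk₁, hk₂]; simp
    have hkw : KerDperp 𝒞 par U w := by
      intro φ
      rw [hw, map_smul, map_add, real_inner_smul_left, inner_add_left, hk₁, hk₂]; simp
    have hsum : ∑ i, δ i = ⟪z, U.symm v⟫ := by
      have e := ho₁.trans ho₂.symm
      unfold ipW eMinus ePlus at e
      rw [hr] at e
      simp only [inner_neg_right, real_inner_smul_right] at e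
      rw [hz, real_inner_smul_left, inner_sub_left]
      rw [← sub_eq_zero, add_sub_add_comm, ← Finset.sum_sub_distrib] at e
      have e2 : ∑ i, δ i = ∑ i, ((if n i = 0 then 1 else |n i|) *
          (y₁.1 i * if n i = 0 then r else if n i < 0 then 1 else 0) -
          (if n i = 0 then 1 else |n i|) *
          (y₂.1 i * if n i = 0 then r else if n i < 0 then 0 else -1)) := by
        refine Finset.sum_congr rfl fun i _ => ?_
        simp only [hδ]
        split_ifs with h0 h1 <;> ring
      rw [e2]
      linear_combination e
    let F : 𝒞 →ₗ[ℝ] ℝ :=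
      { toFun := fun φ => ∑ i, (φ : C(X, ℝ)) (q i) * δ i
        map_add' := by
          intro x y
          simp [add_mul, Finset.sum_add_distrib]
        map_smul' := by
          intro c x
          simp [Finset.mul_sum, mul_assoc] }
    have hFdef : ∀ φ : 𝒞, F φ = ∑ i, (φ : C(X, ℝ)) (q i) * δ i := fun φ => rfl
    have hF0 : ∀ φ : 𝒞, Vanish 𝒞 B φ → F φ = 0 := by
      intro φ hφ
      rw [hFdef]
      exact Finset.sum_eq_zero fun i _ => by
          rw [hφ (q i) (by rw [hBq]; exact ⟨i, rfl⟩)]; ring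
    obtain ⟨u, hu⟩ := hNeumann z F hF0
      ⟨∑ i, |δ i|, by
        intro φ
        rw [hFdef, Finset.sum_mul]
        refine (Finset.abs_sum_le_sum_abs _ _).trans (Finset.sum_le_sum fun i _ => ?_)
        rw [abs_mul, mul_comm]
        refine mul_le_mul_of_nonneg_left ?_ (abs_nonneg _)
        have := (φ : C(X, ℝ)).norm_coe_le_norm (q i)
        rw [Real.norm_eq_abs] at this
        have := norm_nonneg (par φ)
        linarith⟩
      (by rw [hj1 z hkz, ← hsum, hFdef]; simp)
    have hFψ : ∀ (c : ι → ℝ) (i : ι), ∑ k, (ψ i : C(X, ℝ)) (q k) * c k = c i := by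
      intro c i
      rw [Finset.sum_eq_single i, hψ1, one_mul]
      · intro k _ hk
        rw [hψ0 i k hk.symm]; ring
      · simp
    set g : 𝒞 := ∑ k, γ k • ψ k with hg
    have hgq : ∀ i, (g : C(X, ℝ)) (q i) = γ i := by
      intro i
      classical
      have : ∀ k, (ψ k : C(X, ℝ)) (q i) = if k = i then 1 else 0 := by
        intro k
        split_ifs with h
        · rw [h, hψ1]
        · exact hψ0 k i h
      simp [hg, ContinuousMap.sum_apply, this]
    have hzz : -(-z - U.symm (par g)) - U.symm (par g) = z := by abel
    have K : KeyRep 𝒞 B par j U (j g + U.symm (par u) + w) (-z - U.symm (par g)) g u (-z) w := by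
      refine ⟨?_, ?_, hkw, rfl, ?_⟩
      · intro φ hφ
        have e1 := hprod g φ
        have e4 : ∑ i, (g : C(X, ℝ)) (q i) * (φ : C(X, ℝ)) (q i) * nb 𝒞 par ψ b i = 0 :=
          Finset.sum_eq_zero fun i _ => by
            rw [hφ (q i) (by rw [hBq]; exact ⟨i, rfl⟩)]; ring
        rw [e4] at e1
        have e2 := hu φ
        rw [hF0 φ hφ] at e2
        simp only [map_add, U.apply_symm_apply, inner_add_left, inner_sub_left, inner_neg_left,
          hUs', hkw φ, e2]
        rw [real_inner_comm (U (j φ))]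
        linarith
      · intro φ hφ
        rw [hu, hF0 φ hφ, inner_neg_left]; ring
      · rw [hzz]; exact hkz
    have hdu' : ∀ i, duB 𝒞 par j ψ u (-z) i = δ i := by
      intro i
      unfold duB
      rw [hu, hFdef, hFψ, inner_neg_left]; ring
    have hnf : ∀ i, nfb 𝒞 par j U ψ (j g + U.symm (par u) + w) (-z - U.symm (par g)) i =
        γ i * n i + δ i := by
      intro i
      rw [(hkey _ _ _ _ _ _ K).2.1 i, hgq, hdu']
    have hr2 : ∀ a c : H₀, r • (r • (a + c) + r • (a - c)) = a := by
      intro a c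
      rw [← smul_add, smul_smul, hc2]; module
    have hr3 : ∀ a c : H₀, r • (r • (a + c) - r • (a - c)) = c := by
      intro a c
      rw [← smul_sub, smul_smul, hc2]; module
    refine ⟨_, _, g, u, -z, w, K, ?_, ?_⟩
    · unfold Gminus
      have : ((fun i => if nb 𝒞 par ψ b i = 0 then
          (Real.sqrt 2)⁻¹ * ((g : C(X, ℝ)) (q i) +
            nfb 𝒞 par j U ψ (j g + U.symm (par u) + w) (-z - U.symm (par g)) i)
          else if nb 𝒞 par ψ b i < 0 then duB 𝒞 par j ψ u (-z) i / |nb 𝒞 par ψ b i|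
          else nfb 𝒞 par j U ψ (j g + U.symm (par u) + w) (-z - U.symm (par g)) i / |nb 𝒞 par ψ b i|),
          (Real.sqrt 2)⁻¹ • (w + (-(-z - U.symm (par g)) - U.symm (par g)))) = y₁ := by
        rw [hr, hzz]
        refine Prod.ext ?_ (hr2 _ _)
        funext i
        simp only [hnf, hdu', hgq]
        simp only [← hn, hδ, hγ]
        split_ifs with h0 h1
        · rw [h0]; linear_combination (2 * y₁.1 i) * hc2
        · have := abs_pos.2 h0
          field_simp
        · rw [abs_of_nonneg (not_lt.1 h1)]; field_simp; ring
      rw [this]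
      exact proj_id 𝒞 par ψ b _ _ ho₁
    · unfold Gplus
      have : ((fun i => if nb 𝒞 par ψ b i = 0 then
          (Real.sqrt 2)⁻¹ * ((g : C(X, ℝ)) (q i) -
            nfb 𝒞 par j U ψ (j g + U.symm (par u) + w) (-z - U.symm (par g)) i)
          else if nb 𝒞 par ψ b i < 0 then
            nfb 𝒞 par j U ψ (j g + U.symm (par u) + w) (-z - U.symm (par g)) i / |nb 𝒞 par ψ b i|
          else duB 𝒞 par j ψ u (-z) i / |nb 𝒞 par ψ b i|),
          (Real.sqrt 2)⁻¹ • (w - (-(-z - U.symm (par g)) - U.symm (par g)))) = y₂ := by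
        rw [hr, hzz]
        refine Prod.ext ?_ (hr3 _ _)
        funext i
        simp only [hnf, hdu', hgq]
        simp only [← hn, hδ, hγ]
        split_ifs with h0 h1
        · rw [h0]; linear_combination (2 * y₂.1 i) * hc2
        · rw [abs_of_neg h1]; field_simp; ring
        · have := abs_pos.2 h0
          field_simp
      rw [this]
      exact proj_id 𝒞 par ψ b _ _ ho₂

end Stmt13
end

section
/- Distinguished representations, general case (Lemma 'distinguished'): in the setting of the boundary quadruple for divergence free b, for every f ∈ D(∂_B^⊥) with key representation f = j g + U^{-1}(∂u) + w and z := ∂_B^⊥ f − U^{-1}(∂g) ∈ ker ∂^⊥, there exists a single constant c ∈ ℝ such that G₋f = ((1/√2)(g+c+n_B(fb)) on B̊, (du)_B/|n_B b| + c on B̌, n_B(fb)/|n_B b| on B̂, (1/√2)(w − c·U^{-1}v + z)) and G₊f = ((1/√2)(g+c−n_B(fb)) on B̊, n_B(fb)/|n_B b| on B̌, (du)_B/|n_B b| − c on B̂, (1/√2)(w − c·U^{-1}v − z)), both read as equalities in H̃± (i.e. the orthogonal projections P₋ and P₊ in the definitions of G₋f and G₊f are simultaneously realized by the shift by c). -/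
open RealInnerProductSpace ContinuousMap

set_option synthInstance.maxHeartbeats 1000000
set_option maxHeartbeats 1000000

namespace Stmt14

variable {X : Type*} [MetricSpace X] [CompactSpace X]
variable {H : Type*} [NormedAddCommGroup H] [InnerProductSpace ℝ H] [CompleteSpace H]
variable {H₀ : Type*} [NormedAddCommGroup H₀] [InnerProductSpace ℝ H₀] [CompleteSpace H₀]
variable {ι : Type*} [Fintype ι]

/-- elements of `𝒞` vanishing on `B`, i.e. membership in `𝒞_B` -/
def Vanish (𝒞 : Subalgebra ℝ C(X, ℝ)) (B : Set X) (f : 𝒞) : Prop :=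
  ∀ x ∈ B, (f : C(X, ℝ)) x = 0

/-- `d` is the value of the adjoint `∂_B^*` at `v ∈ H` -/
def AdjRel (𝒞 : Subalgebra ℝ C(X, ℝ)) (B : Set X) (par : 𝒞 →ₗ[ℝ] H)
    (j : 𝒞 →ₗ[ℝ] H₀) (v : H) (d : H₀) : Prop :=
  ∀ φ : 𝒞, Vanish 𝒞 B φ → ⟪v, par φ⟫ = ⟪d, j φ⟫

/-- membership in `ker ∂^⊥` -/
def KerDperp (𝒞 : Subalgebra ℝ C(X, ℝ)) (par : 𝒞 →ₗ[ℝ] H) (U : H₀ ≃ₗᵢ[ℝ] H) (w : H₀) : Prop :=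
  ∀ φ : 𝒞, ⟪U w, par φ⟫ = 0

/-- a key representation of `f ∈ D(∂_B^⊥)`, recording the adjoint values `d = ∂_B^*(U f)`
and `eu = ∂_B^*(∂u)` -/
def KeyRep (𝒞 : Subalgebra ℝ C(X, ℝ)) (B : Set X) (par : 𝒞 →ₗ[ℝ] H)
    (j : 𝒞 →ₗ[ℝ] H₀) (U : H₀ ≃ₗᵢ[ℝ] H) (f d : H₀) (g u : 𝒞) (eu w : H₀) : Prop :=
  AdjRel 𝒞 B par j (U f) d ∧
  AdjRel 𝒞 B par j (par u) eu ∧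
  KerDperp 𝒞 par U w ∧
  f = j g + U.symm (par u) + w ∧
  KerDperp 𝒞 par U (-d - U.symm (par g))

/-- the normal part `n_B b` at the boundary point indexed by `i` -/
noncomputable def nb (𝒞 : Subalgebra ℝ C(X, ℝ)) (par : 𝒞 →ₗ[ℝ] H) (ψ : ι → 𝒞) (b : H)
    (i : ι) : ℝ :=
  ⟪b, par (ψ i)⟫

/-- the inner product of `H̃± = ℝ^{B̊} ⊕ ℝ^{B̌} ⊕ ℝ^{B̂} ⊕ ker ∂^⊥` (the three boundary pieces
are encoded as one function on the index set; on `B̌ ∪ B̂` the coordinates are weighted by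
`|n_B b|`) -/
noncomputable def ipW (𝒞 : Subalgebra ℝ C(X, ℝ)) (par : 𝒞 →ₗ[ℝ] H) (ψ : ι → 𝒞) (b : H)
    (p₁ p₂ : (ι → ℝ) × H₀) : ℝ :=
  (∑ i, (if nb 𝒞 par ψ b i = 0 then 1 else |nb 𝒞 par ψ b i|) * (p₁.1 i * p₂.1 i)) +
    ⟪p₁.2, p₂.2⟫

/-- the orthogonal projection onto the orthogonal complement of the span of `e` with respect to
the inner product `ip` -/
noncomputable def projWith (ip : ((ι → ℝ) × H₀) → ((ι → ℝ) × H₀) → ℝ)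
    (e x : (ι → ℝ) × H₀) : (ι → ℝ) × H₀ :=
  x - (ip x e / ip e e) • e

/-- the normal part `n_B(fb)` at the boundary point indexed by `i`, where `d = ∂_B^*(U f)` -/
noncomputable def nfb (𝒞 : Subalgebra ℝ C(X, ℝ)) (par : 𝒞 →ₗ[ℝ] H) (j : 𝒞 →ₗ[ℝ] H₀)
    (U : H₀ ≃ₗᵢ[ℝ] H) (ψ : ι → 𝒞) (f d : H₀) (i : ι) : ℝ :=
  ⟪U f, par (ψ i)⟫ + ⟪-d, j (ψ i)⟫

/-- the normal derivative `(du)_B` at the boundary point indexed by `i`, where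
`eu = ∂_B^*(∂u)` -/
noncomputable def duB (𝒞 : Subalgebra ℝ C(X, ℝ)) (par : 𝒞 →ₗ[ℝ] H) (j : 𝒞 →ₗ[ℝ] H₀)
    (ψ : ι → 𝒞) (u : 𝒞) (eu : H₀) (i : ι) : ℝ :=
  ⟪par u, par (ψ i)⟫ - ⟪eu, j (ψ i)⟫

/-- the vector `((1/√2)𝟏, 𝟏, 0, −(1/√2)U⁻¹v)` spanning the complement of `H₋` -/
noncomputable def eMinus (𝒞 : Subalgebra ℝ C(X, ℝ)) (par : 𝒞 →ₗ[ℝ] H) (ψ : ι → 𝒞) (b : H)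
    (U : H₀ ≃ₗᵢ[ℝ] H) (v : H) : (ι → ℝ) × H₀ :=
  (fun i => if nb 𝒞 par ψ b i = 0 then (Real.sqrt 2)⁻¹
    else if nb 𝒞 par ψ b i < 0 then 1 else 0,
   -((Real.sqrt 2)⁻¹ • U.symm v))

/-- the vector `((1/√2)𝟏, 0, −𝟏, −(1/√2)U⁻¹v)` spanning the complement of `H₊` -/
noncomputable def ePlus (𝒞 : Subalgebra ℝ C(X, ℝ)) (par : 𝒞 →ₗ[ℝ] H) (ψ : ι → 𝒞) (b : H)
    (U : H₀ ≃ₗᵢ[ℝ] H) (v : H) : (ι → ℝ) × H₀ :=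
  (fun i => if nb 𝒞 par ψ b i = 0 then (Real.sqrt 2)⁻¹
    else if nb 𝒞 par ψ b i < 0 then 0 else -1,
   -((Real.sqrt 2)⁻¹ • U.symm v))

/-- `G₋f := P₋((1/√2)(g+n_B(fb))` on `B̊`, `(du)_B/|n_B b|` on `B̌`, `n_B(fb)/|n_B b|` on `B̂`,
`(1/√2)(w+z))` -/
noncomputable def Gminus (𝒞 : Subalgebra ℝ C(X, ℝ)) (par : 𝒞 →ₗ[ℝ] H) (j : 𝒞 →ₗ[ℝ] H₀)
    (U : H₀ ≃ₗᵢ[ℝ] H) (q : ι → X) (ψ : ι → 𝒞) (b : H) (v : H)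
    (f d : H₀) (g u : 𝒞) (eu w : H₀) : (ι → ℝ) × H₀ :=
  projWith (ipW 𝒞 par ψ b) (eMinus 𝒞 par ψ b U v)
    ((fun i => if nb 𝒞 par ψ b i = 0 then
        (Real.sqrt 2)⁻¹ * ((g : C(X, ℝ)) (q i) + nfb 𝒞 par j U ψ f d i)
      else if nb 𝒞 par ψ b i < 0 then duB 𝒞 par j ψ u eu i / |nb 𝒞 par ψ b i|
      else nfb 𝒞 par j U ψ f d i / |nb 𝒞 par ψ b i|),
     (Real.sqrt 2)⁻¹ • (w + (-d - U.symm (par g))))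

/-- `G₊f := P₊((1/√2)(g−n_B(fb))` on `B̊`, `n_B(fb)/|n_B b|` on `B̌`, `(du)_B/|n_B b|` on `B̂`,
`(1/√2)(w−z))` -/
noncomputable def Gplus (𝒞 : Subalgebra ℝ C(X, ℝ)) (par : 𝒞 →ₗ[ℝ] H) (j : 𝒞 →ₗ[ℝ] H₀)
    (U : H₀ ≃ₗᵢ[ℝ] H) (q : ι → X) (ψ : ι → 𝒞) (b : H) (v : H)
    (f d : H₀) (g u : 𝒞) (eu w : H₀) : (ι → ℝ) × H₀ :=
  projWith (ipW 𝒞 par ψ b) (ePlus 𝒞 par ψ b U v)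
    ((fun i => if nb 𝒞 par ψ b i = 0 then
        (Real.sqrt 2)⁻¹ * ((g : C(X, ℝ)) (q i) - nfb 𝒞 par j U ψ f d i)
      else if nb 𝒞 par ψ b i < 0 then nfb 𝒞 par j U ψ f d i / |nb 𝒞 par ψ b i|
      else duB 𝒞 par j ψ u eu i / |nb 𝒞 par ψ b i|),
     (Real.sqrt 2)⁻¹ • (w - (-d - U.symm (par g))))

/-- **Distinguished representations, general case** (Lemma `distinguished`): for every
`f ∈ D(∂_B^⊥)` with key representation `(d, g, u, eu, w)` and `z := −d − U⁻¹(∂g)`, there is a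
single constant `c ∈ ℝ` realizing both orthogonal projections `P₋` and `P₊` simultaneously:
`G₋f = ((1/√2)(g+c+n_B(fb))` on `B̊`, `(du)_B/|n_B b| + c` on `B̌`, `n_B(fb)/|n_B b|` on `B̂`,
`(1/√2)(w − c·U⁻¹v + z))` and `G₊f = ((1/√2)(g+c−n_B(fb))` on `B̊`, `n_B(fb)/|n_B b|` on `B̌`,
`(du)_B/|n_B b| − c` on `B̂`, `(1/√2)(w − c·U⁻¹v − z))`, as equalities in `H̃±`. -/
theorem stmt_14
    (𝒞 : Subalgebra ℝ C(X, ℝ))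
    (act : 𝒞 →ₗ[ℝ] H →ₗ[ℝ] H)
    (hact_one : ∀ v : H, act 1 v = v)
    (hact_symm : ∀ (f : 𝒞) (v w : H), ⟪act f v, w⟫ = ⟪v, act f w⟫)
    (hact_bound : ∀ (f : 𝒞) (v : H), ‖act f v‖ ≤ ‖(f : C(X, ℝ))‖ * ‖v‖)
    (par : 𝒞 →ₗ[ℝ] H)
    (hLeibniz : ∀ f g : 𝒞, par (f * g) = act f (par g) + act g (par f))
    (B : Set X) (hB : IsClosed B)
    (b : H) (hbne : b ≠ 0)
    (hdivfree : ∀ φ : 𝒞, Vanish 𝒞 B φ → ⟪b, par φ⟫ = 0)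
    (j : 𝒞 →ₗ[ℝ] H₀) (hjinj : Function.Injective j)
    (hjdense : Dense (⇑j '' {f : 𝒞 | Vanish 𝒞 B f}))
    (U : H₀ ≃ₗᵢ[ℝ] H) (hU : ∀ f : 𝒞, U (j f) = act f b)
    -- resistance-space laws
    (hconst : ∀ f : 𝒞, par f = 0 ↔ ∃ cst : ℝ, ∀ x : X, (f : C(X, ℝ)) x = cst)
    (hclosedrange : IsClosed ((LinearMap.range par : Submodule ℝ H) : Set H))
    -- the Hodge decomposition `b = ∂h + v`
    (hh : 𝒞) (v : H) (hHodge : b = par hh + v) (hv : ∀ φ : 𝒞, ⟪v, par φ⟫ = 0)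
    -- finite boundary data
    (q : ι → X) (hqinj : Function.Injective q) (hBq : B = Set.range q)
    (ψ : ι → 𝒞)
    (hψ1 : ∀ i, (ψ i : C(X, ℝ)) (q i) = 1)
    (hψ0 : ∀ i i', i ≠ i' → (ψ i : C(X, ℝ)) (q i') = 0)
    (hψharm : ∀ i, ∀ φ : 𝒞, Vanish 𝒞 B φ → ⟪par (ψ i), par φ⟫ = 0) :
    ∀ (f d : H₀) (g u : 𝒞) (eu w : H₀),
      KeyRep 𝒞 B par j U f d g u eu w →
      ∃ c : ℝ,
        Gminus 𝒞 par j U q ψ b v f d g u eu w =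
          (((fun i => if nb 𝒞 par ψ b i = 0 then
              (Real.sqrt 2)⁻¹ * ((g : C(X, ℝ)) (q i) + c + nfb 𝒞 par j U ψ f d i)
            else if nb 𝒞 par ψ b i < 0 then
              duB 𝒞 par j ψ u eu i / |nb 𝒞 par ψ b i| + c
            else nfb 𝒞 par j U ψ f d i / |nb 𝒞 par ψ b i|),
            (Real.sqrt 2)⁻¹ • (w - c • U.symm v + (-d - U.symm (par g)))) : (ι → ℝ) × H₀) ∧
        Gplus 𝒞 par j U q ψ b v f d g u eu w =
          (((fun i => if nb 𝒞 par ψ b i = 0 then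
              (Real.sqrt 2)⁻¹ * ((g : C(X, ℝ)) (q i) + c - nfb 𝒞 par j U ψ f d i)
            else if nb 𝒞 par ψ b i < 0 then
              nfb 𝒞 par j U ψ f d i / |nb 𝒞 par ψ b i|
            else duB 𝒞 par j ψ u eu i / |nb 𝒞 par ψ b i| - c),
            (Real.sqrt 2)⁻¹ • (w - c • U.symm v - (-d - U.symm (par g)))) : (ι → ℝ) × H₀) := by
  classical
  intro f d g u eu w hK
  obtain ⟨hd, heu, hw, hf, hz⟩ := hK
  -- U j 1 = b
  have hj1 : U (j 1) = b := by rw [hU, hact_one]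
  have hpar1 : par 1 = 0 := (hconst 1).2 ⟨1, fun x => by simp⟩
  have hψs : ∀ i i', (ψ i : C(X, ℝ)) (q i') = if i = i' then 1 else 0 := by
    intro i i'
    split_ifs with h
    · subst h; exact hψ1 i
    · exact hψ0 i i' h
  have hS : Vanish 𝒞 B ((∑ i, ψ i) - 1) := by
    intro x hx
    rw [hBq] at hx
    obtain ⟨k, rfl⟩ := hx
    simp [hψs]
  have hSp : par ((∑ i, ψ i) - 1) = ∑ i, par (ψ i) := by
    rw [map_sub, map_sum, hpar1, sub_zero]
  have hSj : j ((∑ i, ψ i) - 1) = ∑ i, j (ψ i) - j 1 := by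
    rw [map_sub, map_sum]
  have hnbsum : ∑ i, nb 𝒞 par ψ b i = 0 := by
    have := hdivfree _ hS
    rw [hSp, inner_sum] at this
    exact this
  -- product rule
  have hprod : ∀ φ : 𝒞, ⟪act g b, par φ⟫ = ⟪b, par (g * φ)⟫ - ⟪U.symm (par g), j φ⟫ := by
    intro φ
    have h1 : ⟪U.symm (par g), j φ⟫ = ⟪b, act φ (par g)⟫ := by
      rw [← U.inner_map_map, U.apply_symm_apply, hU, real_inner_comm, hact_symm]
    rw [h1, hLeibniz, inner_add_right, hact_symm]
    ring
  have hUf : ∀ y : H, ⟪U f, y⟫ = ⟪act g b, y⟫ + ⟪par u, y⟫ + ⟪U w, y⟫ := by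
    intro y
    rw [hf, map_add, map_add, hU, U.apply_symm_apply, inner_add_left, inner_add_left]
  have hde : eu = d + U.symm (par g) := by
    have key : ∀ y : H₀, ⟪eu - (d + U.symm (par g)), y⟫ = (0 : ℝ) := by
      have : (fun y : H₀ => ⟪eu - (d + U.symm (par g)), y⟫) = fun _ => (0 : ℝ) := by
        apply Continuous.ext_on hjdense (by fun_prop) (by fun_prop)
        rintro _ ⟨φ, hφ, rfl⟩
        have hφ' : Vanish 𝒞 B φ := hφ
        have hgφ : Vanish 𝒞 B (g * φ) := by
          intro x hx
          simp [hφ' x hx]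
        have e1 := hd φ hφ'
        have e2 := heu φ hφ'
        have e3 := hprod φ
        rw [hdivfree _ hgφ] at e3
        have e4 := hUf (par φ)
        have e5 := hw φ
        simp only [inner_sub_left, inner_add_left]
        linarith
      exact fun y => congrFun this y
    exact sub_eq_zero.1 (inner_self_eq_zero.1 (key _))
  have hdz : -d - U.symm (par g) = -eu := by rw [hde]; abel
  have hn : ∀ i, nfb 𝒞 par j U ψ f d i =
      (g : C(X, ℝ)) (q i) * nb 𝒞 par ψ b i + duB 𝒞 par j ψ u eu i := by
    intro i
    have hv0 : Vanish 𝒞 B (g * ψ i - ((g : C(X, ℝ)) (q i)) • ψ i) := by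
      intro x hx
      rw [hBq] at hx
      obtain ⟨k, rfl⟩ := hx
      by_cases h : i = k
      · subst h; simp
      · simp [hψ0 i k h]
    have e0 := hdivfree _ hv0
    rw [map_sub, map_smul, inner_sub_right, inner_smul_right] at e0
    have e1 := hUf (par (ψ i))
    have e2 := hprod (ψ i)
    have e3 := hw (ψ i)
    unfold nfb duB nb
    rw [hde, inner_neg_left, inner_add_left]
    linarith
  have hdu : ∑ i, duB 𝒞 par j ψ u eu i = -⟪eu, U.symm v⟫ := by
    have e1 := heu _ hS
    rw [hSp, hSj, inner_sub_right, inner_sum, inner_sum] at e1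
    have e2 : ⟪eu, j 1⟫ = ⟪eu, U.symm v⟫ := by
      have e3 := hz hh
      rw [hdz, map_neg, inner_neg_left] at e3
      rw [← U.inner_map_map, hj1, hHodge, inner_add_right, ← U.inner_map_map eu (U.symm v),
        U.apply_symm_apply]
      linarith
    unfold duB
    rw [Finset.sum_sub_distrib]
    linarith
  have hs2 : (Real.sqrt 2)⁻¹ * (Real.sqrt 2)⁻¹ = 1 / 2 := by
    rw [← mul_inv, Real.mul_self_sqrt (by norm_num)]; norm_num
  have hee : ipW 𝒞 par ψ b (eMinus 𝒞 par ψ b U v) (eMinus 𝒞 par ψ b U v) =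
      ipW 𝒞 par ψ b (ePlus 𝒞 par ψ b U v) (ePlus 𝒞 par ψ b U v) := by
    rw [← sub_eq_zero]
    unfold ipW eMinus ePlus
    rw [add_sub_add_right_eq_sub, ← Finset.sum_sub_distrib, ← neg_eq_zero,
      ← Finset.sum_neg_distrib]
    refine Eq.trans ?_ hnbsum
    refine Finset.sum_congr rfl fun i _ => ?_
    by_cases h0 : nb 𝒞 par ψ b i = 0
    · simp [h0]
    · by_cases h1 : nb 𝒞 par ψ b i < 0
      · simp [h0, h1, abs_of_neg h1]
      · simp [h0, h1, abs_of_nonneg (not_lt.1 h1)]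
  unfold Gminus Gplus projWith
  rw [← hee]
  set xm : (ι → ℝ) × H₀ := ((fun i => if nb 𝒞 par ψ b i = 0 then
        (Real.sqrt 2)⁻¹ * ((g : C(X, ℝ)) (q i) + nfb 𝒞 par j U ψ f d i)
      else if nb 𝒞 par ψ b i < 0 then duB 𝒞 par j ψ u eu i / |nb 𝒞 par ψ b i|
      else nfb 𝒞 par j U ψ f d i / |nb 𝒞 par ψ b i|),
     (Real.sqrt 2)⁻¹ • (w + (-d - U.symm (par g)))) with hxm
  set xp : (ι → ℝ) × H₀ := ((fun i => if nb 𝒞 par ψ b i = 0 then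
        (Real.sqrt 2)⁻¹ * ((g : C(X, ℝ)) (q i) - nfb 𝒞 par j U ψ f d i)
      else if nb 𝒞 par ψ b i < 0 then nfb 𝒞 par j U ψ f d i / |nb 𝒞 par ψ b i|
      else duB 𝒞 par j ψ u eu i / |nb 𝒞 par ψ b i|),
     (Real.sqrt 2)⁻¹ • (w - (-d - U.symm (par g)))) with hxp
  have hxe : ipW 𝒞 par ψ b xm (eMinus 𝒞 par ψ b U v) =
      ipW 𝒞 par ψ b xp (ePlus 𝒞 par ψ b U v) := by
    rw [← sub_eq_zero]
    have hin : ⟪xm.2, (eMinus 𝒞 par ψ b U v).2⟫ - ⟪xp.2, (ePlus 𝒞 par ψ b U v).2⟫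
        = ⟪eu, U.symm v⟫ := by
      simp only [hxm, hxp, eMinus, ePlus, hdz]
      simp only [inner_neg_right, inner_smul_left, inner_smul_right, inner_add_left,
        inner_sub_left, inner_neg_left, conj_trivial]
      linear_combination 2 * ⟪eu, U.symm v⟫ * hs2
    unfold ipW
    rw [add_sub_add_comm, hin, ← Finset.sum_sub_distrib]
    have : ∑ i, duB 𝒞 par j ψ u eu i + ⟪eu, U.symm v⟫ = 0 := by rw [hdu]; ring
    refine Eq.trans ?_ this
    congr 1
    refine Finset.sum_congr rfl fun i _ => ?_
    have hni := hn i
    simp only [hxm, hxp, eMinus, ePlus]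
    by_cases h0 : nb 𝒞 par ψ b i = 0
    · rw [h0] at hni
      simp only [h0, if_true]
      rw [hni]
      linear_combination 2 * duB 𝒞 par j ψ u eu i * hs2
    · have ha : |nb 𝒞 par ψ b i| ≠ 0 := abs_ne_zero.2 h0
      by_cases h1 : nb 𝒞 par ψ b i < 0
      · simp only [h0, h1, if_true, if_false]
        field_simp
        ring
      · simp only [h0, h1, if_false]
        field_simp
        ring
  rw [← hxe]
  generalize ipW 𝒞 par ψ b xm (eMinus 𝒞 par ψ b U v) /
    ipW 𝒞 par ψ b (eMinus 𝒞 par ψ b U v) (eMinus 𝒞 par ψ b U v) = c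
  refine ⟨-c, ?_, ?_⟩
  · rw [hxm]
    unfold eMinus
    ext1
    · funext i
      simp only [Prod.fst_sub, Prod.smul_fst, Pi.sub_apply, Pi.smul_apply, smul_eq_mul]
      split_ifs <;> ring
    · simp only [Prod.snd_sub, Prod.smul_snd]
      module
  · rw [hxp]
    unfold ePlus
    ext1
    · funext i
      simp only [Prod.fst_sub, Prod.smul_fst, Pi.sub_apply, Pi.smul_apply, smul_eq_mul]
      split_ifs <;> ring
    · simp only [Prod.snd_sub, Prod.smul_snd]
      module


end Stmt14
end

section
/- Pull-back of classical transport solutions (Proposition 'intervaltospace'): let a > 0, let h ∈ 𝒞 with 0 ≤ h(x) ≤ a for all x ∈ X, and let V : (0,∞) × ℝ → ℝ be continuously differentiable with ∂_t V(t,y) + ∂_y V(t,y) = 0 for all t > 0 and y ∈ (0,a). Then for every t > 0 the composition V(t,·)∘h belongs to 𝒞 with ∂(V(t,·)∘h) = ((∂_y V)(t,·)∘h)•(∂h), the map t ↦ ∂(V(t,·)∘h) is continuous from (0,∞) to H, the map t ↦ v(t) := j(V(t,·)∘h) is continuously differentiable from (0,∞) to H₀ with derivative (d/dt)v(t) = j((∂_t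 V)(t,·)∘h) = −j((∂_y V)(t,·)∘h), and consequently, if U : H₀ → H is a linear isometry with U(j f) = f•(∂h) for all f ∈ C(X,ℝ), then ∂(V(t,·)∘h) = U(−(d/dt)v(t)), i.e. v satisfies the transport-type equation (d/dt)v(t) + U^{-1}∂(V(t,·)∘h) = 0 for all t > 0. In particular, for V̊ : ℝ → ℝ continuously differentiable, V(t,y) := V̊(y − t) satisfies the hypotheses and v(t) = j(V̊∘(h − t)) solves this equation. -/
open RealInnerProductSpace ContinuousMap

set_option synthInstance.maxHeartbeats 1000000
set_option maxHeartbeats 1000000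

theorem hasDerivAt_pull {X : Type*} [MetricSpace X] [CompactSpace X]
    (G G' : ℝ → C(X, ℝ))
    (hG : ∀ t, 0 < t → ∀ x, HasDerivAt (fun s => G s x) (G' t x) t)
    (hc : ContinuousOn G' (Set.Ioi 0)) (t : ℝ) (ht : 0 < t) :
    HasDerivAt G (G' t) t := by
  rw [hasDerivAt_iff_isLittleO, Asymptotics.isLittleO_iff]
  intro ε hε
  have hct : ContinuousAt G' t := hc.continuousAt (Ioi_mem_nhds ht)
  obtain ⟨δ, hδ, hb⟩ := Metric.mem_nhds_iff.1
    (Filter.inter_mem (Ioi_mem_nhds ht) (hct.preimage_mem_nhds (Metric.ball_mem_nhds (G' t) hε)))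
  filter_upwards [Metric.ball_mem_nhds t hδ] with s hs
  rw [ContinuousMap.norm_le _ (by positivity)]
  intro x
  have := (convex_ball t δ).norm_image_sub_le_of_norm_hasDerivWithin_le
    (f := fun r => G r x - r * G' t x) (f' := fun r => G' r x - 1 * G' t x) (C := ε)
    (fun r hr => (((hG r (hb hr).1 x).sub ((hasDerivAt_id r).mul_const _))).hasDerivWithinAt)
    (fun r hr => by
      have h1 : ‖G' r - G' t‖ < ε := by simpa [dist_eq_norm] using (hb hr).2
      have h2 := (G' r - G' t).norm_coe_le_norm x
      simp only [ContinuousMap.sub_apply] at h2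
      rw [one_mul]; linarith)
    (Metric.mem_ball_self hδ) hs
  refine le_trans (le_of_eq ?_) this
  simp only [ContinuousMap.sub_apply, ContinuousMap.smul_apply, smul_eq_mul]
  congr 1; ring

theorem exists_pull {X : Type*} [MetricSpace X] [CompactSpace X]
    (h : C(X, ℝ)) (W : ℝ → ℝ → ℝ)
    (hW : ContinuousOn (fun p : ℝ × ℝ => W p.1 p.2) (Set.Ioi 0 ×ˢ Set.univ)) :
    ∃ G : ℝ → C(X, ℝ), (∀ t, 0 < t → ∀ x, G t x = W t (h x)) ∧ ContinuousOn G (Set.Ioi 0) := by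
  classical
  have hc : Continuous (fun p : Set.Ioi (0:ℝ) × X => W p.1.1 (h p.2)) :=
    hW.comp_continuous (f := fun p : Set.Ioi (0:ℝ) × X => ((p.1.1, h p.2) : ℝ × ℝ))
      (by fun_prop) (fun p => ⟨p.1.2, trivial⟩)
  let φ : C(Set.Ioi (0:ℝ), C(X, ℝ)) := ContinuousMap.curry ⟨_, hc⟩
  refine ⟨fun t => if ht : 0 < t then φ ⟨t, ht⟩ else 0, ?_, ?_⟩
  · intro t ht x
    simp only [dif_pos ht]; rfl
  · rw [continuousOn_iff_continuous_domRestrict]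
    convert φ.continuous using 1
    ext1 t
    have : (0:ℝ) < t.1 := t.2
    simp [this]

theorem part_one
    {X : Type*} [MetricSpace X] [CompactSpace X]
    {H : Type*} [NormedAddCommGroup H] [InnerProductSpace ℝ H] [CompleteSpace H]
    {H₀ : Type*} [NormedAddCommGroup H₀] [InnerProductSpace ℝ H₀] [CompleteSpace H₀]
    (𝒞 : Subalgebra ℝ C(X, ℝ))
    (act : C(X, ℝ) →ₗ[ℝ] H →ₗ[ℝ] H)
    (hact_one : ∀ v : H, act 1 v = v)
    (hact_symm : ∀ (f : C(X, ℝ)) (v w : H), ⟪act f v, w⟫ = ⟪v, act f w⟫)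
    (hact_bound : ∀ (f : C(X, ℝ)) (v : H), ‖act f v‖ ≤ ‖f‖ * ‖v‖)
    (par : 𝒞 →ₗ[ℝ] H)
    (hLeibniz : ∀ f g : 𝒞, par (f * g) = act (f : C(X, ℝ)) (par g) + act (g : C(X, ℝ)) (par f))
    (a : ℝ) (ha : 0 < a)
    (h : 𝒞) (hh0 : ∀ x : X, 0 ≤ (h : C(X, ℝ)) x) (hha : ∀ x : X, (h : C(X, ℝ)) x ≤ a)
    -- chain rule law for `h`
    (hchain : ∀ F F' : ℝ → ℝ, (∀ y : ℝ, HasDerivAt F (F' y) y) → Continuous F' →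
      ∃ c : 𝒞, (∀ x : X, (c : C(X, ℝ)) x = F ((h : C(X, ℝ)) x)) ∧
        ∀ c' : C(X, ℝ), (∀ x : X, c' x = F' ((h : C(X, ℝ)) x)) → par c = act c' (par h))
    (j : C(X, ℝ) →ₗ[ℝ] H₀)
    (hj : ∀ f : C(X, ℝ), ‖j f‖ ≤ ‖f‖ * ‖par h‖)
    (U : H₀ →ₗᵢ[ℝ] H) (hU : ∀ f : C(X, ℝ), U (j f) = act f (par h))
    -- the classical solution `V` and its partial derivatives
    (V Vt Vy : ℝ → ℝ → ℝ)
    (hVt : ∀ t > (0 : ℝ), ∀ y : ℝ, HasDerivAt (fun s => V s y) (Vt t y) t)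
    (hVy : ∀ t > (0 : ℝ), ∀ y : ℝ, HasDerivAt (fun z => V t z) (Vy t y) y)
    (hVtc : ContinuousOn (fun p : ℝ × ℝ => Vt p.1 p.2) (Set.Ioi 0 ×ˢ Set.univ))
    (hVyc : ContinuousOn (fun p : ℝ × ℝ => Vy p.1 p.2) (Set.Ioi 0 ×ˢ Set.univ))
    (hpde : ∀ t > (0 : ℝ), ∀ y ∈ Set.Ioo (0 : ℝ) a, Vt t y + Vy t y = 0) :
    -- the pulled back solution `comp t = V(t,·)∘h ∈ 𝒞`, with `tcomp t = (∂ₜV)(t,·)∘h`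
    -- and `dcomp t = (∂_yV)(t,·)∘h`
    (∃ (comp : ℝ → 𝒞) (tcomp dcomp : ℝ → C(X, ℝ)),
      (∀ t, 0 < t → ∀ x : X, ((comp t : 𝒞) : C(X, ℝ)) x = V t ((h : C(X, ℝ)) x)) ∧
      (∀ t, 0 < t → ∀ x : X, tcomp t x = Vt t ((h : C(X, ℝ)) x)) ∧
      (∀ t, 0 < t → ∀ x : X, dcomp t x = Vy t ((h : C(X, ℝ)) x)) ∧
      -- `∂(V(t,·)∘h) = ((∂_yV)(t,·)∘h)•(∂h)`
      (∀ t, 0 < t → par (comp t) = act (dcomp t) (par h)) ∧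
      -- `t ↦ ∂(V(t,·)∘h)` is continuous from `(0,∞)` to `H`
      ContinuousOn (fun t => par (comp t)) (Set.Ioi 0) ∧
      -- `t ↦ v(t) = j(V(t,·)∘h)` is differentiable with `v'(t) = j((∂ₜV)(t,·)∘h)`
      (∀ t, 0 < t → HasDerivAt (fun s => j ((comp s : 𝒞) : C(X, ℝ))) (j (tcomp t)) t) ∧
      -- `v'(t) = −j((∂_yV)(t,·)∘h)`
      (∀ t, 0 < t → j (tcomp t) = -(j (dcomp t))) ∧
      -- the derivative is continuous, i.e. `v ∈ C¹((0,∞), H₀)`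
      ContinuousOn (fun t => j (tcomp t)) (Set.Ioi 0) ∧
      -- the transport-type equation `∂(V(t,·)∘h) = U(−v'(t))`
      (∀ t, 0 < t → par (comp t) = U (-(j (tcomp t))))) := by
  obtain ⟨T, hT, hTc⟩ := exists_pull (h : C(X, ℝ)) Vt hVtc
  obtain ⟨D, hD, hDc⟩ := exists_pull (h : C(X, ℝ)) Vy hVyc
  have hex : ∀ t : ℝ, ∃ c : 𝒞, 0 < t → (∀ x : X, (c : C(X, ℝ)) x = V t ((h : C(X, ℝ)) x)) ∧
      par c = act (D t) (par h) := by
    intro t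
    by_cases ht : 0 < t
    · obtain ⟨c, hc1, hc2⟩ := hchain (V t) (Vy t) (hVy t ht)
        (hVyc.comp_continuous (f := fun y : ℝ => ((t, y) : ℝ × ℝ)) (by fun_prop)
          (fun y => ⟨ht, trivial⟩))
      exact ⟨c, fun _ => ⟨hc1, hc2 _ (hD t ht)⟩⟩
    · exact ⟨0, fun h => absurd h ht⟩
  choose c hc using hex
  have hTD : ∀ t, 0 < t → T t = - D t := by
    intro t ht
    have hcl : ∀ y ∈ Set.Icc (0:ℝ) a, Vt t y + Vy t y = 0 := by
      have h1 : Continuous (Vt t) := hVtc.comp_continuous (f := fun y : ℝ => ((t, y) : ℝ × ℝ))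
        (by fun_prop) (fun y => ⟨ht, trivial⟩)
      have h2 : Continuous (Vy t) := hVyc.comp_continuous (f := fun y : ℝ => ((t, y) : ℝ × ℝ))
        (by fun_prop) (fun y => ⟨ht, trivial⟩)
      intro y hy
      rw [← closure_Ioo ha.ne] at hy
      exact closure_minimal (fun z hz => hpde t ht z hz)
        (isClosed_eq (h1.add h2) continuous_const) hy
    ext x
    have := hcl _ ⟨hh0 x, hha x⟩
    simp only [ContinuousMap.neg_apply, hT t ht, hD t ht]
    linarith
  let J : C(X, ℝ) →L[ℝ] H₀ := j.mkContinuous ‖par h‖ (fun f => by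
    rw [mul_comm]; exact hj f)
  have hJ : ∀ f, J f = j f := fun f => rfl
  have hjTD : ∀ t, 0 < t → j (T t) = -(j (D t)) := fun t ht => by rw [hTD t ht, map_neg]
  have hpar : ∀ t, 0 < t → par (c t) = U (-(j (T t))) := fun t ht => by
    rw [hjTD t ht, neg_neg, hU, (hc t ht).2]
  have hjc : ContinuousOn (fun t => j (T t)) (Set.Ioi 0) := J.continuous.comp_continuousOn hTc
  refine ⟨c, T, D, fun t ht => (hc t ht).1, hT, hD, fun t ht => (hc t ht).2, ?_, ?_, hjTD, hjc, hpar⟩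
  · exact (U.continuous.comp_continuousOn hjc.neg).congr (fun t ht => hpar t ht)
  · intro t ht
    have := hasDerivAt_pull (fun s => ((c s : 𝒞) : C(X, ℝ))) T (fun s hs x => by
      rw [hT s hs]
      refine (hVt s hs _).congr_of_eventuallyEq ?_
      filter_upwards [Ioi_mem_nhds hs] with r hr
      exact (hc r hr).1 x) hTc t ht
    exact J.hasFDerivAt.comp_hasDerivAt t this

/-- **Pull-back of classical transport solutions** (Proposition `intervaltospace`):
let `a > 0`, `h ∈ 𝒞` with `0 ≤ h ≤ a`, and let `V : (0,∞) × ℝ → ℝ` be continuously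
differentiable with `∂ₜV + ∂_yV = 0` on `(0,∞) × (0,a)`.  Then for every `t > 0` the
composition `V(t,·)∘h` belongs to `𝒞` with `∂(V(t,·)∘h) = ((∂_yV)(t,·)∘h)•(∂h)`,
`t ↦ ∂(V(t,·)∘h)` is continuous on `(0,∞)`, `t ↦ v(t) := j(V(t,·)∘h)` is continuously
differentiable on `(0,∞)` with `v'(t) = j((∂ₜV)(t,·)∘h) = −j((∂_yV)(t,·)∘h)`, and if
`U : H₀ → H` is a linear isometry with `U(j f) = f•(∂h)` then `∂(V(t,·)∘h) = U(−v'(t))`,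
i.e. `v` solves the transport-type equation.  In particular, for `V̊ ∈ C¹(ℝ)` the choice
`V(t,y) := V̊(y − t)` satisfies the hypotheses and `v(t) = j(V̊∘(h − t))` solves the
equation. -/
theorem stmt_17
    {X : Type*} [MetricSpace X] [CompactSpace X]
    {H : Type*} [NormedAddCommGroup H] [InnerProductSpace ℝ H] [CompleteSpace H]
    {H₀ : Type*} [NormedAddCommGroup H₀] [InnerProductSpace ℝ H₀] [CompleteSpace H₀]
    (𝒞 : Subalgebra ℝ C(X, ℝ))
    (act : C(X, ℝ) →ₗ[ℝ] H →ₗ[ℝ] H)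
    (hact_one : ∀ v : H, act 1 v = v)
    (hact_symm : ∀ (f : C(X, ℝ)) (v w : H), ⟪act f v, w⟫ = ⟪v, act f w⟫)
    (hact_bound : ∀ (f : C(X, ℝ)) (v : H), ‖act f v‖ ≤ ‖f‖ * ‖v‖)
    (par : 𝒞 →ₗ[ℝ] H)
    (hLeibniz : ∀ f g : 𝒞, par (f * g) = act (f : C(X, ℝ)) (par g) + act (g : C(X, ℝ)) (par f))
    (a : ℝ) (ha : 0 < a)
    (h : 𝒞) (hh0 : ∀ x : X, 0 ≤ (h : C(X, ℝ)) x) (hha : ∀ x : X, (h : C(X, ℝ)) x ≤ a)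
    -- chain rule law for `h`
    (hchain : ∀ F F' : ℝ → ℝ, (∀ y : ℝ, HasDerivAt F (F' y) y) → Continuous F' →
      ∃ c : 𝒞, (∀ x : X, (c : C(X, ℝ)) x = F ((h : C(X, ℝ)) x)) ∧
        ∀ c' : C(X, ℝ), (∀ x : X, c' x = F' ((h : C(X, ℝ)) x)) → par c = act c' (par h))
    (j : C(X, ℝ) →ₗ[ℝ] H₀)
    (hj : ∀ f : C(X, ℝ), ‖j f‖ ≤ ‖f‖ * ‖par h‖)
    (U : H₀ →ₗᵢ[ℝ] H) (hU : ∀ f : C(X, ℝ), U (j f) = act f (par h))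
    -- the classical solution `V` and its partial derivatives
    (V Vt Vy : ℝ → ℝ → ℝ)
    (hVt : ∀ t > (0 : ℝ), ∀ y : ℝ, HasDerivAt (fun s => V s y) (Vt t y) t)
    (hVy : ∀ t > (0 : ℝ), ∀ y : ℝ, HasDerivAt (fun z => V t z) (Vy t y) y)
    (hVtc : ContinuousOn (fun p : ℝ × ℝ => Vt p.1 p.2) (Set.Ioi 0 ×ˢ Set.univ))
    (hVyc : ContinuousOn (fun p : ℝ × ℝ => Vy p.1 p.2) (Set.Ioi 0 ×ˢ Set.univ))
    (hpde : ∀ t > (0 : ℝ), ∀ y ∈ Set.Ioo (0 : ℝ) a, Vt t y + Vy t y = 0) :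
    -- the pulled back solution `comp t = V(t,·)∘h ∈ 𝒞`, with `tcomp t = (∂ₜV)(t,·)∘h`
    -- and `dcomp t = (∂_yV)(t,·)∘h`
    (∃ (comp : ℝ → 𝒞) (tcomp dcomp : ℝ → C(X, ℝ)),
      (∀ t, 0 < t → ∀ x : X, ((comp t : 𝒞) : C(X, ℝ)) x = V t ((h : C(X, ℝ)) x)) ∧
      (∀ t, 0 < t → ∀ x : X, tcomp t x = Vt t ((h : C(X, ℝ)) x)) ∧
      (∀ t, 0 < t → ∀ x : X, dcomp t x = Vy t ((h : C(X, ℝ)) x)) ∧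
      -- `∂(V(t,·)∘h) = ((∂_yV)(t,·)∘h)•(∂h)`
      (∀ t, 0 < t → par (comp t) = act (dcomp t) (par h)) ∧
      -- `t ↦ ∂(V(t,·)∘h)` is continuous from `(0,∞)` to `H`
      ContinuousOn (fun t => par (comp t)) (Set.Ioi 0) ∧
      -- `t ↦ v(t) = j(V(t,·)∘h)` is differentiable with `v'(t) = j((∂ₜV)(t,·)∘h)`
      (∀ t, 0 < t → HasDerivAt (fun s => j ((comp s : 𝒞) : C(X, ℝ))) (j (tcomp t)) t) ∧
      -- `v'(t) = −j((∂_yV)(t,·)∘h)`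
      (∀ t, 0 < t → j (tcomp t) = -(j (dcomp t))) ∧
      -- the derivative is continuous, i.e. `v ∈ C¹((0,∞), H₀)`
      ContinuousOn (fun t => j (tcomp t)) (Set.Ioi 0) ∧
      -- the transport-type equation `∂(V(t,·)∘h) = U(−v'(t))`
      (∀ t, 0 < t → par (comp t) = U (-(j (tcomp t))))) ∧
    -- in particular: for `V̊ ∈ C¹(ℝ)` the function `v(t) = j(V̊∘(h − t))` solves the equation
    (∀ V0 V0' : ℝ → ℝ, (∀ y : ℝ, HasDerivAt V0 (V0' y) y) → Continuous V0' →
      ∃ (comp : ℝ → 𝒞) (tcomp : ℝ → C(X, ℝ)),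
        (∀ t, 0 < t → ∀ x : X, ((comp t : 𝒞) : C(X, ℝ)) x = V0 ((h : C(X, ℝ)) x - t)) ∧
        (∀ t, 0 < t → ∀ x : X, tcomp t x = -V0' ((h : C(X, ℝ)) x - t)) ∧
        (∀ t, 0 < t → HasDerivAt (fun s => j ((comp s : 𝒞) : C(X, ℝ))) (j (tcomp t)) t) ∧
        (∀ t, 0 < t → par (comp t) = U (-(j (tcomp t))))) := by
  refine ⟨part_one 𝒞 act hact_one hact_symm hact_bound par hLeibniz a ha h hh0 hha hchain j hj U hU
    V Vt Vy hVt hVy hVtc hVyc hpde, ?_⟩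
  intro V0 V0' h0 h0c
  obtain ⟨c, T, D, h1, h2, -, -, -, h6, -, -, h9⟩ :=
    part_one 𝒞 act hact_one hact_symm hact_bound par hLeibniz a ha h hh0 hha hchain j hj U hU
      (fun t y => V0 (y - t)) (fun t y => -V0' (y - t)) (fun t y => V0' (y - t))
      (fun t _ y => by
        exact (h0 (y - t)).comp_const_sub y t)
      (fun t _ y => by
        exact (h0 (y - t)).comp_sub_const y t)
      (by fun_prop) (by fun_prop) (fun t _ y _ => by simp)
  exact ⟨c, T, h1, h2, h6, h9⟩
end
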